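/- Let l > 0 and let u be the vortex map on B_l. There exists l₀ > 0 such that for every l ≥ l₀ the L¹-relaxed area of the graph of u satisfies Ā(u, B_l) = ∫_{B_l} √(1 + |∇u(x)|²) dx + π, where ∇u is the classical gradient of u on B_l \ {0}. -/

import Mathlib

open MeasureTheory Filter Metric Topology
open scoped ENNReal NNReal

noncomputable section

abbrev V2 : Type := EuclideanSpace ℝ (Fin 2)

/-- Squared Frobenius norm of (the matrix of) a continuous linear map on `ℝ²`. -/
def frobSq (L : V2 →L[ℝ] V2) : ℝ :=
  ∑ i : Fin 2, ∑ j : Fin 2, (L (EuclideanSpace.single j 1) i) ^ 2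

/-- Determinant of (the matrix of) a continuous linear map on `ℝ²`. -/
def detJ (L : V2 →L[ℝ] V2) : ℝ :=
  L (EuclideanSpace.single 0 1) 0 * L (EuclideanSpace.single 1 1) 1 -
    L (EuclideanSpace.single 1 1) 0 * L (EuclideanSpace.single 0 1) 1

/-- The vortex map `x ↦ x / |x|` (equal to `0` at the origin). -/
def vortex (x : V2) : V2 := ‖x‖⁻¹ • x

/-- The area integrand `√(1 + |∇v|² + (det ∇v)²)`. -/
def areaIntegrand (v : V2 → V2) (x : V2) : ℝ :=
  Real.sqrt (1 + frobSq (fderiv ℝ v x) + detJ (fderiv ℝ v x) ^ 2)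

/-- Area of the graph of `v` over the set `E`. -/
def graphArea (v : V2 → V2) (E : Set V2) : ℝ≥0∞ :=
  ∫⁻ x in E, ENNReal.ofReal (areaIntegrand v x)

/-- `∫_{B_l} √(1 + |∇u|²) dx` for the vortex map `u`. -/
def vortexGradArea (l : ℝ) : ℝ≥0∞ :=
  ∫⁻ x in ball (0 : V2) l, ENNReal.ofReal (Real.sqrt (1 + frobSq (fderiv ℝ vortex x)))

/-- The `L¹`-relaxed area of the graph of the vortex map over `B_l`:
the infimum of `liminf_k 𝒜(v_k, B_l)` over all sequences `(v_k)` of maps that are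
`C¹` on `B_l` and converge to the vortex map in `L¹(B_l, ℝ²)`. -/
def relaxedArea (l : ℝ) : ℝ≥0∞ :=
  sInf { a : ℝ≥0∞ | ∃ v : ℕ → V2 → V2,
    (∀ k, ContDiffOn ℝ 1 (v k) (ball (0 : V2) l)) ∧
    Tendsto (fun k => ∫⁻ x in ball (0 : V2) l, ENNReal.ofReal ‖v k x - vortex x‖)
      atTop (𝓝 0) ∧
    a = Filter.liminf (fun k => graphArea (v k) (ball (0 : V2) l)) atTop }

/-!
Upper bound: the regularisations `x / √(‖x‖² + c)` have, in the limit `c → 0`, the area of the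
vortex plus the area `π` of the target disc, which they cover once.

Lower bound: a calibration. The area integrand dominates every function `α + γ det L + ⟪b, L τ⟫`
with `‖τ‖ = 1` and `α² + γ² + ‖b‖² ≤ 1`. Integrating by parts, expressions
`φ(‖x‖) κ(‖v‖²) det ∇v + …` coming from a planar field `a(‖v‖²) v^⊥` of curl `κ`, and tangential
derivatives of functions of `(x, v)`, integrate to zero for every competitor `v`. With `κ` close to
the indicator function of the unit disc and a radial `φ` falling from `1` to `0` with
`φ² + φ'² ≤ 1`, which is possible once the radius is large enough, they combine to a null Lagrangian
whose sum with the density `√(1 + |∇u|²) - φ'(r) / (2r)` is, in the limit, below the area integrand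
of `v` plus an error controlled by `‖v - u‖`. The integral of `-φ'(r) / (2r)` is `π`.
-/

open scoped RealInnerProductSpace Manifold Convolution

/-! ### Null Lagrangians -/

section NullLagrangian

variable {E : Type*} [NormedAddCommGroup E] [NormedSpace ℝ E]

lemma contDiff_of_contDiffOn_of_tsupport_subset {F : Type*} [NormedAddCommGroup F]
    [NormedSpace ℝ F] {n : WithTop ℕ∞} {f : E → F} {U : Set E} (hU : IsOpen U)
    (hf : ContDiffOn ℝ n f U) (hfU : tsupport f ⊆ U) : ContDiff ℝ n f := by
  refine contDiff_iff_contDiffAt.2 fun x => ?_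
  by_cases hx : x ∈ tsupport f
  · exact hf.contDiffAt (hU.mem_nhds (hfU hx))
  · exact contDiffAt_const.congr_of_eventuallyEq (notMem_tsupport_iff_eventuallyEq.1 hx)

variable [FiniteDimensional ℝ E]

lemma exists_contDiff_hasCompactSupport_eventuallyEq {K U : Set E} {g : E → ℝ} (hK : IsCompact K)
    (hU : IsOpen U) (hKU : K ⊆ U) (hg : ContDiffOn ℝ 1 g U) :
    ∃ g' : E → ℝ, ContDiff ℝ 1 g' ∧ HasCompactSupport g' ∧ g' =ᶠ[𝓝ˢ K] g := by
  obtain ⟨K', hK', hKK', hK'U⟩ := exists_compact_between hK hU hKU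
  obtain ⟨χ, hχK, hχK', -⟩ :=
    exists_contMDiffMap_one_nhds_of_subset_interior 𝓘(ℝ, E) (n := 1) hK.isClosed hKK'
  have hsupp : tsupport (fun x => χ x * g x) ⊆ K' := by
    refine closure_minimal (fun x hx => ?_) hK'.isClosed
    by_contra hxK'
    exact hx (by simp [hχK' x hxK'])
  refine ⟨fun x => χ x * g x, ?_, hK'.of_isClosed_subset (isClosed_tsupport _) hsupp, ?_⟩
  · exact contDiff_of_contDiffOn_of_tsupport_subset hU (χ.contMDiff.contDiff.contDiffOn.mul hg)
      (hsupp.trans hK'U)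
  · filter_upwards [hχK] with x hx
    rw [hx, one_mul]

lemma exists_contDiff_hasCompactSupport_fderiv_mul_fderiv_eq {f g : E → ℝ} {U : Set E}
    (hU : IsOpen U) (hfc : HasCompactSupport f) (hfU : tsupport f ⊆ U) (hg : ContDiffOn ℝ 1 g U) :
    ∃ g' : E → ℝ, ContDiff ℝ 1 g' ∧ HasCompactSupport g' ∧
      ∀ x a b, fderiv ℝ f x a * fderiv ℝ g x b = fderiv ℝ f x a * fderiv ℝ g' x b := by
  obtain ⟨g', hg', hgc', hgg'⟩ := exists_contDiff_hasCompactSupport_eventuallyEq hfc hU hfU hg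
  refine ⟨g', hg', hgc', fun x a b => ?_⟩
  by_cases hx : x ∈ tsupport f
  · rw [(hgg'.filter_mono (nhds_le_nhdsSet hx)).fderiv_eq]
  · simp [fderiv_of_notMem_tsupport ℝ hx]

variable [MeasurableSpace E] [BorelSpace E] (μ : Measure E) [μ.IsAddHaarMeasure]

lemma convolution_fderiv_comm {f g : E → ℝ} (hf : ContDiff ℝ 1 f) (hfc : HasCompactSupport f)
    (hg : ContDiff ℝ 1 g) (hgc : HasCompactSupport g) (a b : E) :
    (fun x => fderiv ℝ f x a) ⋆[ContinuousLinearMap.mul ℝ ℝ, μ] (fun x => fderiv ℝ g x b) =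
      (fun x => fderiv ℝ f x b) ⋆[ContinuousLinearMap.mul ℝ ℝ, μ] (fun x => fderiv ℝ g x a) := by
  set L := ContinuousLinearMap.mul ℝ ℝ
  have h_cont {h : E → ℝ} (hh : ContDiff ℝ 1 h) (v : E) : Continuous fun x => fderiv ℝ h x v :=
    (hh.continuous_fderiv one_ne_zero).clm_apply continuous_const
  have h_right {k h : E → ℝ} (hk : Continuous k) (hh : ContDiff ℝ 1 h) (hhc : HasCompactSupport h)
      (x v : E) : fderiv ℝ (k ⋆[L, μ] h) x v = (k ⋆[L, μ] fun y => fderiv ℝ h y v) x := by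
    rw [(hhc.hasFDerivAt_convolution_right L hk.locallyIntegrable hh x).fderiv,
      convolution_precompR_apply L hk.locallyIntegrable (hhc.fderiv ℝ)
        (hh.continuous_fderiv one_ne_zero)]
  have h_flip (k h : E → ℝ) : k ⋆[L, μ] h = h ⋆[L, μ] k := by
    conv_lhs => rw [← convolution_flip]
    congr
    ext
    simp [L]
  have h_once : (fun x => fderiv ℝ f x a) ⋆[L, μ] g = f ⋆[L, μ] fun x => fderiv ℝ g x a := by
    ext x
    rw [← h_right hf.continuous hg hgc, h_flip f, h_right hg.continuous hf hfc, h_flip]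
  ext x
  calc ((fun x => fderiv ℝ f x a) ⋆[L, μ] fun x => fderiv ℝ g x b) x
      = fderiv ℝ ((fun x => fderiv ℝ f x a) ⋆[L, μ] g) x b :=
        (h_right (h_cont hf a) hg hgc x b).symm
    _ = fderiv ℝ ((fun x => fderiv ℝ g x a) ⋆[L, μ] f) x b := by rw [h_once, h_flip]
    _ = ((fun x => fderiv ℝ f x b) ⋆[L, μ] fun x => fderiv ℝ g x a) x := by
      rw [h_right (h_cont hg a) hf hfc, h_flip]

lemma integral_fderiv_mul_fderiv_comm {f g : E → ℝ} (hf : ContDiff ℝ 1 f)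
    (hfc : HasCompactSupport f) (hg : ContDiff ℝ 1 g) (hgc : HasCompactSupport g) (a b : E) :
    ∫ x, fderiv ℝ f x a * fderiv ℝ g x b ∂μ = ∫ x, fderiv ℝ f x b * fderiv ℝ g x a ∂μ := by
  have h_neg (x v : E) : fderiv ℝ (fun y => g (-y)) x v = -fderiv ℝ g (-x) v := by
    simpa using congrArg (· v) (fderiv_comp_smul (f := g) (x := x) (-1 : ℝ))
  have h := congrFun (convolution_fderiv_comm μ hf hfc (hg.comp contDiff_neg)
    (hgc.comp_homeomorph (Homeomorph.neg E)) a b) 0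
  simpa [convolution_def, Function.comp_def, h_neg, integral_neg] using h

lemma integrable_fderiv_mul_fderiv {f g : E → ℝ} {U : Set E} (hU : IsOpen U)
    (hf : ContDiffOn ℝ 1 f U) (hfc : HasCompactSupport f) (hfU : tsupport f ⊆ U)
    (hg : ContDiffOn ℝ 1 g U) (a b : E) :
    Integrable (fun x => fderiv ℝ f x a * fderiv ℝ g x b) μ := by
  obtain ⟨g', hg', -, hgg'⟩ :=
    exists_contDiff_hasCompactSupport_fderiv_mul_fderiv_eq hU hfc hfU hg
  have hf' := contDiff_of_contDiffOn_of_tsupport_subset hU hf hfU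
  simp only [hgg']
  refine Continuous.integrable_of_hasCompactSupport ?_ (hfc.fderiv_apply (𝕜 := ℝ) a).mul_right
  exact ((hf'.continuous_fderiv one_ne_zero).clm_apply continuous_const).mul
    ((hg'.continuous_fderiv one_ne_zero).clm_apply continuous_const)

lemma integral_fderiv_mul_fderiv_comm_of_tsupport_subset {f g : E → ℝ} {U : Set E}
    (hU : IsOpen U) (hf : ContDiffOn ℝ 1 f U) (hfc : HasCompactSupport f) (hfU : tsupport f ⊆ U)
    (hg : ContDiffOn ℝ 1 g U) (a b : E) :
    ∫ x, fderiv ℝ f x a * fderiv ℝ g x b ∂μ = ∫ x, fderiv ℝ f x b * fderiv ℝ g x a ∂μ := by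
  obtain ⟨g', hg', hgc', hgg'⟩ :=
    exists_contDiff_hasCompactSupport_fderiv_mul_fderiv_eq hU hfc hfU hg
  simp only [hgg']
  exact integral_fderiv_mul_fderiv_comm μ
    (contDiff_of_contDiffOn_of_tsupport_subset hU hf hfU) hfc hg' hgc' a b

end NullLagrangian

section Plane

/-- Rotation of the plane by a right angle, `(x₀, x₁) ↦ (-x₁, x₀)`. The derivative of `f` at `x`
along `perp x` is the angular derivative `∂f/∂ϑ`. -/
def perp : V2 →L[ℝ] V2 :=
  LinearMap.toContinuousLinearMap
    { toFun := fun x => !₂[-x 1, x 0]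
      map_add' := fun x y => by ext i; fin_cases i <;> simp; ring
      map_smul' := fun c x => by ext i; fin_cases i <;> simp }

@[simp] lemma perp_apply_zero (x : V2) : perp x 0 = -x 1 := rfl

@[simp] lemma perp_apply_one (x : V2) : perp x 1 = x 0 := rfl

lemma inner_eq_add (x y : V2) : ⟪x, y⟫ = x 0 * y 0 + x 1 * y 1 := by
  simp [PiLp.inner_apply, Fin.sum_univ_two, mul_comm]

lemma norm_sq_eq_add (x : V2) : ‖x‖ ^ 2 = x 0 ^ 2 + x 1 ^ 2 := by
  rw [EuclideanSpace.real_norm_sq_eq, Fin.sum_univ_two]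

lemma perp_perp (x : V2) : perp (perp x) = -x := by
  ext i; fin_cases i <;> simp

lemma inner_perp_perp (x y : V2) : ⟪perp x, perp y⟫ = ⟪x, y⟫ := by
  simp only [inner_eq_add, perp_apply_zero, perp_apply_one]; ring

lemma inner_perp_self (x : V2) : ⟪perp x, x⟫ = 0 := by
  simp only [inner_eq_add, perp_apply_zero, perp_apply_one]; ring

lemma norm_perp (x : V2) : ‖perp x‖ = ‖x‖ := by
  rw [← sq_eq_sq₀ (norm_nonneg _) (norm_nonneg _), ← real_inner_self_eq_norm_sq,
    inner_perp_perp, real_inner_self_eq_norm_sq]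

lemma eq_smul_single_add_smul_single (x : V2) :
    x = x 0 • EuclideanSpace.single 0 1 + x 1 • EuclideanSpace.single 1 1 := by
  ext i; fin_cases i <;> simp

/-- The Jacobian determinant `∂₀f ∂₁g - ∂₁f ∂₀g` of the pair `(f, g)`. -/
def jacobian (f g : V2 → ℝ) (x : V2) : ℝ :=
  fderiv ℝ f x (EuclideanSpace.single 0 1) * fderiv ℝ g x (EuclideanSpace.single 1 1) -
    fderiv ℝ f x (EuclideanSpace.single 1 1) * fderiv ℝ g x (EuclideanSpace.single 0 1)

section NullJacobian

variable {f g : V2 → ℝ} {U : Set V2} (hU : IsOpen U) (hf : ContDiffOn ℝ 1 f U)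
  (hfc : HasCompactSupport f) (hfU : tsupport f ⊆ U)
include hU hf hfc hfU

lemma integrable_jacobian (hg : ContDiffOn ℝ 1 g U) : Integrable (jacobian f g) :=
  (integrable_fderiv_mul_fderiv volume hU hf hfc hfU hg _ _).sub
    (integrable_fderiv_mul_fderiv volume hU hf hfc hfU hg _ _)

lemma integral_jacobian_eq_zero (hg : ContDiffOn ℝ 1 g U) : ∫ x, jacobian f g x = 0 := by
  have h_int := integrable_fderiv_mul_fderiv volume hU hf hfc hfU hg
  simp only [jacobian]
  rw [integral_sub (h_int _ _) (h_int _ _),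
    integral_fderiv_mul_fderiv_comm_of_tsupport_subset volume hU hf hfc hfU hg, sub_self]

end NullJacobian

lemma hasFDerivAt_norm_sq (x : V2) :
    HasFDerivAt (fun y : V2 => ‖y‖ ^ 2) ((2 : ℝ) • innerSL ℝ x) x := by
  simpa [two_smul] using (hasStrictFDerivAt_norm_sq x).hasFDerivAt

lemma jacobian_norm_sq (f : V2 → ℝ) (x : V2) :
    jacobian f (fun y => ‖y‖ ^ 2) x = -2 * fderiv ℝ f x (perp x) := by
  rw [eq_smul_single_add_smul_single (perp x), jacobian, (hasFDerivAt_norm_sq x).fderiv]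
  simp only [inner_eq_add, smul_apply, innerSL_apply_apply, smul_eq_mul, PiLp.single_eq_same,
    ne_eq, zero_ne_one, one_ne_zero, not_false_eq_true, PiLp.single_eq_of_ne, mul_one, mul_zero,
    add_zero, zero_add, map_add, map_smul, perp_apply_zero, perp_apply_one]
  ring

section Angular

variable {f : V2 → ℝ} {U : Set V2} (hU : IsOpen U) (hf : ContDiffOn ℝ 1 f U)
  (hfc : HasCompactSupport f) (hfU : tsupport f ⊆ U)
include hU hf hfc hfU

lemma integrable_fderiv_perp : Integrable fun x => fderiv ℝ f x (perp x) := by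
  have h := integrable_jacobian hU hf hfc hfU (contDiff_norm_sq ℝ).contDiffOn
  simpa [jacobian_norm_sq, mul_assoc] using h.const_mul (-(1 / 2))

lemma integral_fderiv_perp_eq_zero : ∫ x, fderiv ℝ f x (perp x) = 0 := by
  have h := integral_jacobian_eq_zero hU hf hfc hfU (contDiff_norm_sq ℝ).contDiffOn
  simp only [jacobian_norm_sq, integral_const_mul] at h
  linarith

end Angular

end Plane

/-! ### Radial and angular derivatives -/

section VortexMap

lemma norm_vortex {x : V2} (hx : x ≠ 0) : ‖vortex x‖ = 1 := by
  rw [vortex, norm_smul, norm_inv, norm_norm, inv_mul_cancel₀ (norm_ne_zero_iff.2 hx)]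

lemma norm_vortex_le_one (x : V2) : ‖vortex x‖ ≤ 1 := by
  rw [vortex, norm_smul, norm_inv, norm_norm]
  exact inv_mul_le_one

lemma norm_smul_vortex {x : V2} (hx : x ≠ 0) : ‖x‖ • vortex x = x :=
  smul_inv_smul₀ (norm_ne_zero_iff.2 hx) x

lemma measurable_vortex : Measurable vortex :=
  measurable_norm.inv.smul measurable_id

lemma contDiffOn_vortex {n : WithTop ℕ∞} : ContDiffOn ℝ n vortex {0}ᶜ :=
  fun _ hx => (((contDiffAt_norm ℝ hx).inv (norm_ne_zero_iff.2 hx)).smul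
    contDiffAt_id).contDiffWithinAt

lemma hasFDerivAt_norm {x : V2} (hx : x ≠ 0) :
    HasFDerivAt (fun y : V2 => ‖y‖) (innerSL ℝ (vortex x)) x := by
  have h := (hasFDerivAt_norm_sq x).sqrt (by positivity)
  simp only [Real.sqrt_sq (norm_nonneg _)] at h
  refine h.congr_fderiv ?_
  rw [vortex, map_smul, smul_smul]
  congr 1
  field_simp

lemma hasFDerivAt_comp_norm {k : ℝ → ℝ} {x : V2} (hx : x ≠ 0) (hk : DifferentiableAt ℝ k ‖x‖) :
    HasFDerivAt (fun y : V2 => k ‖y‖) (deriv k ‖x‖ • innerSL ℝ (vortex x)) x :=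
  hk.hasDerivAt.comp_hasFDerivAt x (hasFDerivAt_norm hx)

lemma inner_vortex_perp (x : V2) : ⟪vortex x, perp x⟫ = 0 := by
  rw [vortex, inner_smul_left, real_inner_comm, inner_perp_self, mul_zero]

lemma fderiv_vortex_perp {x : V2} (hx : x ≠ 0) :
    fderiv ℝ vortex x (perp x) = perp (vortex x) := by
  have h := ((hasDerivAt_inv (norm_ne_zero_iff.2 hx)).comp_hasFDerivAt x
    (hasFDerivAt_norm hx)).smul (hasFDerivAt_id x)
  have h' : HasFDerivAt vortex _ x := h
  rw [h'.fderiv]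
  simp only [Function.comp_apply, id_eq, add_apply,
    smul_apply, ContinuousLinearMap.id_apply,
    ContinuousLinearMap.smulRight_apply, innerSL_apply_apply, inner_vortex_perp, smul_zero,
    zero_smul, add_zero]
  rw [vortex, map_smul]

end VortexMap

section RadialWeight

variable {k : ℝ → ℝ} {h : V2 → ℝ} {ε R l : ℝ}

lemma fderiv_radial_mul_perp {x : V2} (hx : x ≠ 0) (hk : DifferentiableAt ℝ k ‖x‖)
    (hh : DifferentiableAt ℝ h x) :
    fderiv ℝ (fun y => k ‖y‖ * h y) x (perp x) = k ‖x‖ * fderiv ℝ h x (perp x) := by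
  have h_mul : HasFDerivAt (fun y => k ‖y‖ * h y) _ x :=
    (hasFDerivAt_comp_norm hx hk).mul hh.hasFDerivAt
  rw [h_mul.fderiv]
  simp [inner_vortex_perp]

lemma tsupport_radial_mul_subset (h : V2 → ℝ) (hkε : ∀ r ≤ ε, k r = 0)
    (hkR : ∀ r, R ≤ r → k r = 0) :
    tsupport (fun x : V2 => k ‖x‖ * h x) ⊆ closedBall 0 R \ ball 0 ε := by
  refine closure_minimal (fun x hx => ?_) (isClosed_closedBall.sdiff isOpen_ball)
  have hkx : k ‖x‖ ≠ 0 := left_ne_zero_of_mul hx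
  simp only [Set.mem_sdiff, mem_closedBall_zero_iff, mem_ball_zero_iff, not_lt]
  exact ⟨le_of_not_ge fun hR => hkx (hkR _ hR), le_of_not_ge fun hε => hkx (hkε _ hε)⟩

variable (hε : 0 < ε) (hRl : R < l) (hk : ContDiffOn ℝ 1 k (Set.Ioi 0))
  (hkε : ∀ r ≤ ε, k r = 0) (hkR : ∀ r, R ≤ r → k r = 0)
  (hh : ContDiffOn ℝ 1 h (ball 0 l \ {0}))
include hε hRl hk hkε hkR hh

lemma integrableOn_and_integral_radial_mul_fderiv_perp_eq_zero :
    IntegrableOn (fun x => k ‖x‖ * fderiv ℝ h x (perp x)) (ball 0 l) ∧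
      ∫ x in ball 0 l, k ‖x‖ * fderiv ℝ h x (perp x) = 0 := by
  set U : Set V2 := ball 0 l \ {0}
  set f : V2 → ℝ := fun x => k ‖x‖ * h x
  have hU : IsOpen U := isOpen_ball.sdiff isClosed_singleton
  have h_norm : ContDiffOn ℝ 1 (fun x : V2 => ‖x‖) U :=
    fun x hx => (contDiffAt_norm ℝ hx.2).contDiffWithinAt
  have hf : ContDiffOn ℝ 1 f U :=
    (hk.comp h_norm fun x hx => norm_pos_iff.2 hx.2).mul hh
  have hsupp : tsupport f ⊆ closedBall 0 R \ ball 0 ε := tsupport_radial_mul_subset h hkε hkR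
  have hfc : HasCompactSupport f :=
    (isCompact_closedBall 0 R).of_isClosed_subset (isClosed_tsupport f)
      (hsupp.trans Set.sdiff_subset)
  have hfU : tsupport f ⊆ U := hsupp.trans
    (Set.sdiff_subset_sdiff (closedBall_subset_ball hRl) (by simpa using hε))
  have h_eq : Set.EqOn (fun x => fderiv ℝ f x (perp x))
      (fun x => k ‖x‖ * fderiv ℝ h x (perp x)) (ball 0 l) := fun x hxl => by
    rcases eq_or_ne x 0 with rfl | hx
    · simp only [map_zero, mul_zero]
    · exact fderiv_radial_mul_perp hx
        ((hk.contDiffAt (Ioi_mem_nhds (norm_pos_iff.2 hx))).differentiableAt one_ne_zero)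
        ((hh.contDiffAt (hU.mem_nhds ⟨hxl, hx⟩)).differentiableAt one_ne_zero)
  refine ⟨(integrable_fderiv_perp hU hf hfc hfU).integrableOn.congr_fun h_eq measurableSet_ball, ?_⟩
  rw [← setIntegral_congr_fun measurableSet_ball h_eq,
    setIntegral_eq_integral_of_forall_compl_eq_zero fun x hx => ?_,
    integral_fderiv_perp_eq_zero hU hf hfc hfU]
  rw [fderiv_of_notMem_tsupport ℝ fun hx' => hx (hfU hx').1, zero_apply]

end RadialWeight

/-! ### Upper bound -/

section RegularizedVortex

/-- `r ↦ 1 / √(r² + c)`, the factor by which the regularised vortex rescales `x` at `‖x‖ = r`. -/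
def invSqrtSqAdd (c r : ℝ) : ℝ := (√(r ^ 2 + c))⁻¹

/-- The regularised vortex `x ↦ x / √(‖x‖² + c)`; for `c = 0` it is the vortex map. -/
def regVortex (c : ℝ) (x : V2) : V2 := invSqrtSqAdd c ‖x‖ • x

lemma invSqrtSqAdd_nonneg (c r : ℝ) : 0 ≤ invSqrtSqAdd c r :=
  inv_nonneg.2 (Real.sqrt_nonneg _)

lemma invSqrtSqAdd_zero {r : ℝ} (hr : 0 ≤ r) : invSqrtSqAdd 0 r = r⁻¹ := by
  rw [invSqrtSqAdd, add_zero, Real.sqrt_sq hr]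

lemma invSqrtSqAdd_le_inv {c r : ℝ} (hc : 0 ≤ c) (hr : 0 < r) : invSqrtSqAdd c r ≤ r⁻¹ :=
  inv_anti₀ hr (Real.le_sqrt_of_sq_le (by linarith))

lemma invSqrtSqAdd_sq_mul {c r : ℝ} (h : 0 < r ^ 2 + c) :
    invSqrtSqAdd c r ^ 2 * (r ^ 2 + c) = 1 := by
  rw [invSqrtSqAdd, inv_pow, Real.sq_sqrt h.le, inv_mul_cancel₀ h.ne']

lemma hasDerivAt_invSqrtSqAdd {c r : ℝ} (h : 0 < r ^ 2 + c) :
    HasDerivAt (invSqrtSqAdd c) (-r * invSqrtSqAdd c r ^ 3) r := by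
  have h_sqrt := (((hasDerivAt_pow 2 r).add_const c).sqrt h.ne').inv (Real.sqrt_pos.2 h).ne'
  refine h_sqrt.congr_deriv ?_
  have := Real.sqrt_pos.2 h
  rw [invSqrtSqAdd]
  field_simp
  norm_num

lemma tendsto_invSqrtSqAdd_atTop (c : ℝ) : Tendsto (invSqrtSqAdd c) atTop (𝓝 0) :=
  (Real.tendsto_sqrt_atTop.comp
    (tendsto_atTop_add_const_right _ c (tendsto_pow_atTop two_ne_zero))).inv_tendsto_atTop

lemma tendsto_invSqrtSqAdd_param {r : ℝ} (hr : 0 < r) :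
    Tendsto (fun c => invSqrtSqAdd c r) (𝓝 0) (𝓝 r⁻¹) := by
  have h : ContinuousAt (fun c => (√(r ^ 2 + c))⁻¹) 0 :=
    ContinuousAt.inv₀ (by fun_prop) (by simp [Real.sqrt_sq hr.le, hr.ne'])
  rw [← invSqrtSqAdd_zero hr.le]
  exact h

lemma regVortex_zero : regVortex 0 = vortex := by
  ext1 x
  rw [regVortex, invSqrtSqAdd_zero (norm_nonneg x), vortex]

lemma contDiff_regVortex {c : ℝ} (hc : 0 < c) : ContDiff ℝ 1 (regVortex c) := by
  have h_sqrt : ContDiff ℝ 1 fun x : V2 => √(‖x‖ ^ 2 + c) :=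
    ((contDiff_norm_sq ℝ).add contDiff_const).sqrt fun x => by positivity
  exact (h_sqrt.inv fun x => by positivity).smul contDiff_id

lemma norm_regVortex_le_one {c : ℝ} (hc : 0 ≤ c) (x : V2) : ‖regVortex c x‖ ≤ 1 := by
  rcases eq_or_ne x 0 with rfl | hx
  · simp [regVortex]
  have hx' := norm_pos_iff.2 hx
  calc ‖regVortex c x‖ = invSqrtSqAdd c ‖x‖ * ‖x‖ := by
        rw [regVortex, norm_smul, Real.norm_of_nonneg (invSqrtSqAdd_nonneg c _)]
    _ ≤ ‖x‖⁻¹ * ‖x‖ := by gcongr; exact invSqrtSqAdd_le_inv hc hx'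
    _ = 1 := inv_mul_cancel₀ hx'.ne'

lemma tendsto_regVortex {x : V2} (hx : x ≠ 0) :
    Tendsto (fun c => regVortex c x) (𝓝 0) (𝓝 (vortex x)) :=
  (tendsto_invSqrtSqAdd_param (norm_pos_iff.2 hx)).smul_const x

lemma fderiv_regVortex_apply {c : ℝ} (hc : 0 ≤ c) {x : V2} (hx : x ≠ 0) (y : V2) :
    fderiv ℝ (regVortex c) x y =
      invSqrtSqAdd c ‖x‖ • y - (invSqrtSqAdd c ‖x‖ ^ 3 * ⟪x, y⟫) • x := by
  have hk := hasDerivAt_invSqrtSqAdd (c := c) (r := ‖x‖) (by positivity)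
  have h : HasFDerivAt (regVortex c) _ x :=
    (hasFDerivAt_comp_norm hx hk.differentiableAt).smul (hasFDerivAt_id x)
  have h_inner : ‖x‖ * ⟪vortex x, y⟫ = ⟪x, y⟫ := by
    rw [← real_inner_smul_left, norm_smul_vortex hx]
  rw [h.fderiv, hk.deriv]
  simp only [add_apply, smul_apply, ContinuousLinearMap.id_apply,
    ContinuousLinearMap.smulRight_apply, innerSL_apply_apply, smul_eq_mul]
  rw [← h_inner, sub_eq_add_neg, ← neg_smul]
  ring_nf

lemma frobSq_fderiv_regVortex {c : ℝ} (hc : 0 ≤ c) {x : V2} (hx : x ≠ 0) :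
    frobSq (fderiv ℝ (regVortex c) x) =
      invSqrtSqAdd c ‖x‖ ^ 2 + (c * invSqrtSqAdd c ‖x‖ ^ 3) ^ 2 := by
  have hg := invSqrtSqAdd_sq_mul (c := c) (r := ‖x‖) (by positivity)
  rw [norm_sq_eq_add] at hg
  simp only [frobSq, fderiv_regVortex_apply hc hx, Fin.sum_univ_two, inner_eq_add]
  generalize invSqrtSqAdd c ‖x‖ = g at *
  have hcg : c * g ^ 3 = g * (1 - g ^ 2 * (x 0 ^ 2 + x 1 ^ 2)) := by linear_combination g * hg
  rw [hcg]
  simp only [PiLp.sub_apply, PiLp.smul_apply, smul_eq_mul, PiLp.single_eq_same, ne_eq,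
    zero_ne_one, one_ne_zero, not_false_eq_true, PiLp.single_eq_of_ne, mul_one, mul_zero,
    add_zero, zero_add]
  ring

lemma detJ_fderiv_regVortex {c : ℝ} (hc : 0 ≤ c) {x : V2} (hx : x ≠ 0) :
    detJ (fderiv ℝ (regVortex c) x) = c * invSqrtSqAdd c ‖x‖ ^ 4 := by
  have hg := invSqrtSqAdd_sq_mul (c := c) (r := ‖x‖) (by positivity)
  rw [norm_sq_eq_add] at hg
  simp only [detJ, fderiv_regVortex_apply hc hx, inner_eq_add]
  generalize invSqrtSqAdd c ‖x‖ = g at *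
  simp only [PiLp.sub_apply, PiLp.smul_apply, smul_eq_mul, PiLp.single_eq_same, ne_eq,
    zero_ne_one, one_ne_zero, not_false_eq_true, PiLp.single_eq_of_ne, mul_one, mul_zero,
    add_zero, zero_add]
  linear_combination -g ^ 2 * hg

lemma frobSq_fderiv_vortex {x : V2} (hx : x ≠ 0) : frobSq (fderiv ℝ vortex x) = ‖x‖⁻¹ ^ 2 := by
  rw [← regVortex_zero, frobSq_fderiv_regVortex le_rfl hx, invSqrtSqAdd_zero (norm_nonneg x)]
  ring

/-- A bound for the excess of the area integrand of `regVortex c` over that of the vortex map, as a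
function of `r = ‖x‖`. Its integral over the plane tends to `π`. -/
def regVortexExcess (c r : ℝ) : ℝ := c * invSqrtSqAdd c r ^ 3 + c * invSqrtSqAdd c r ^ 4

lemma regVortexExcess_nonneg {c : ℝ} (hc : 0 ≤ c) (r : ℝ) : 0 ≤ regVortexExcess c r := by
  have := invSqrtSqAdd_nonneg c r
  unfold regVortexExcess
  positivity

lemma areaIntegrand_regVortex_le {c : ℝ} (hc : 0 ≤ c) {x : V2} (hx : x ≠ 0) :
    areaIntegrand (regVortex c) x ≤
      √(1 + frobSq (fderiv ℝ vortex x)) + regVortexExcess c ‖x‖ := by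
  have hg0 := invSqrtSqAdd_nonneg c ‖x‖
  have hg1 := invSqrtSqAdd_le_inv hc (norm_pos_iff.2 hx)
  rw [areaIntegrand, frobSq_fderiv_regVortex hc hx, detJ_fderiv_regVortex hc hx,
    frobSq_fderiv_vortex hx, regVortexExcess]
  generalize invSqrtSqAdd c ‖x‖ = g at *
  have h_factor : 1 + (g ^ 2 + (c * g ^ 3) ^ 2) + (c * g ^ 4) ^ 2 =
      (1 + g ^ 2) * (1 + (c * g ^ 3) ^ 2) := by ring
  have h_sqrt {t : ℝ} (ht : 0 ≤ t) : √(1 + t ^ 2) ≤ 1 + t :=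
    Real.sqrt_le_iff.2 ⟨by positivity, by linarith [add_sq 1 t]⟩
  have hcg : 0 ≤ c * g ^ 3 := by positivity
  calc √(1 + (g ^ 2 + (c * g ^ 3) ^ 2) + (c * g ^ 4) ^ 2)
      = √(1 + g ^ 2) * √(1 + (c * g ^ 3) ^ 2) := by
        rw [h_factor, Real.sqrt_mul (by positivity)]
    _ ≤ √(1 + g ^ 2) * (1 + c * g ^ 3) := by gcongr; exact h_sqrt hcg
    _ = √(1 + g ^ 2) + √(1 + g ^ 2) * (c * g ^ 3) := by ring
    _ ≤ √(1 + ‖x‖⁻¹ ^ 2) + (1 + g) * (c * g ^ 3) := by gcongr; exact h_sqrt hg0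
    _ = √(1 + ‖x‖⁻¹ ^ 2) + (c * g ^ 3 + c * g ^ 4) := by ring

end RegularizedVortex

section PlanarRadialIntegral

variable {f F : ℝ → ℝ} {L : ℝ} (hF : ∀ r ∈ Set.Ici (0 : ℝ), HasDerivAt F (r * f r) r)
  (hf : ∀ r ∈ Set.Ioi (0 : ℝ), 0 ≤ r * f r) (hL : Tendsto F atTop (𝓝 L))
include hF hf hL

lemma integrable_comp_norm_of_hasDerivAt : Integrable fun x : V2 => f ‖x‖ := by
  rw [integrable_fun_norm_addHaar]
  simpa using integrableOn_Ioi_deriv_of_nonneg' hF hf hL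

lemma integral_comp_norm_of_hasDerivAt : ∫ x : V2, f ‖x‖ = 2 * Real.pi * (L - F 0) := by
  have h_ball : (volume : Measure V2).real (ball 0 1) = Real.pi := by
    rw [Measure.real, EuclideanSpace.volume_ball_fin_two]
    simp [Real.pi_pos.le]
  have h_Ioi := integral_Ioi_of_hasDerivAt_of_nonneg' hF hf hL
  rw [integral_fun_norm_addHaar, h_ball, finrank_euclideanSpace, Fintype.card_fin]
  simp only [Nat.add_one_sub_one, pow_one, smul_eq_mul, h_Ioi, nsmul_eq_mul]
  push_cast
  ring

end PlanarRadialIntegral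

section UpperBound

lemma lintegral_regVortexExcess {c : ℝ} (hc : 0 < c) :
    ∫⁻ x : V2, ENNReal.ofReal (regVortexExcess c ‖x‖) =
      ENNReal.ofReal (2 * Real.pi * √c + Real.pi) := by
  set F : ℝ → ℝ := fun r => -c * invSqrtSqAdd c r - c / 2 * invSqrtSqAdd c r ^ 2
  have hF : ∀ r ∈ Set.Ici (0 : ℝ), HasDerivAt F (r * regVortexExcess c r) r := fun r _ => by
    have h := hasDerivAt_invSqrtSqAdd (c := c) (r := r) (by positivity)
    refine ((h.const_mul (-c)).sub ((h.pow 2).const_mul (c / 2))).congr_deriv ?_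
    rw [regVortexExcess]
    push_cast
    ring
  have h_nonneg : ∀ r ∈ Set.Ioi (0 : ℝ), 0 ≤ r * regVortexExcess c r := fun r hr =>
    mul_nonneg (le_of_lt hr) (regVortexExcess_nonneg hc.le r)
  have hL : Tendsto F atTop (𝓝 (-c * 0 - c / 2 * 0 ^ 2)) :=
    ((tendsto_invSqrtSqAdd_atTop c).const_mul _).sub
      (((tendsto_invSqrtSqAdd_atTop c).pow 2).const_mul _)
  have hF0 : F 0 = -√c - 1 / 2 := by
    have : 0 < √c := Real.sqrt_pos.2 hc
    simp only [F, invSqrtSqAdd, zero_pow two_ne_zero, zero_add, inv_pow, Real.sq_sqrt hc.le]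
    field_simp
    linear_combination 2 * Real.sq_sqrt hc.le
  rw [← ofReal_integral_eq_lintegral_ofReal (integrable_comp_norm_of_hasDerivAt hF h_nonneg hL)
    (Eventually.of_forall fun x => regVortexExcess_nonneg hc.le ‖x‖),
    integral_comp_norm_of_hasDerivAt hF h_nonneg hL, hF0]
  ring_nf

lemma ae_restrict_ball_ne_zero (l : ℝ) : ∀ᵐ x : V2 ∂volume.restrict (ball 0 l), x ≠ 0 :=
  ae_restrict_of_ae (Measure.ae_ne volume 0)

lemma graphArea_regVortex_le {c : ℝ} (hc : 0 < c) (l : ℝ) :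
    graphArea (regVortex c) (ball 0 l) ≤
      vortexGradArea l + ENNReal.ofReal (2 * Real.pi * √c + Real.pi) := by
  have h_meas : Measurable fun x : V2 => ENNReal.ofReal (regVortexExcess c ‖x‖) := by
    unfold regVortexExcess invSqrtSqAdd
    fun_prop
  calc graphArea (regVortex c) (ball 0 l)
      ≤ ∫⁻ x in ball (0 : V2) l, (ENNReal.ofReal √(1 + frobSq (fderiv ℝ vortex x)) +
          ENNReal.ofReal (regVortexExcess c ‖x‖)) := by
        refine lintegral_mono_ae ?_
        filter_upwards [ae_restrict_ball_ne_zero l] with x hx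
        rw [← ENNReal.ofReal_add (Real.sqrt_nonneg _) (regVortexExcess_nonneg hc.le _)]
        exact ENNReal.ofReal_le_ofReal (areaIntegrand_regVortex_le hc.le hx)
    _ = vortexGradArea l + ∫⁻ x in ball (0 : V2) l, ENNReal.ofReal (regVortexExcess c ‖x‖) :=
        lintegral_add_right _ h_meas
    _ ≤ vortexGradArea l + ENNReal.ofReal (2 * Real.pi * √c + Real.pi) := by
        rw [← lintegral_regVortexExcess hc]
        gcongr
        exact Measure.restrict_le_self

lemma tendsto_lintegral_regVortex_sub_vortex {c : ℕ → ℝ} (hc : ∀ k, 0 < c k)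
    (hc0 : Tendsto c atTop (𝓝 0)) (l : ℝ) :
    Tendsto (fun k => ∫⁻ x in ball (0 : V2) l, ENNReal.ofReal ‖regVortex (c k) x - vortex x‖)
      atTop (𝓝 0) := by
  have h_dom := tendsto_lintegral_of_dominated_convergence (μ := volume.restrict (ball (0 : V2) l))
    (F := fun k x => ENNReal.ofReal ‖regVortex (c k) x - vortex x‖) (f := fun _ => 0)
    (fun _ => ENNReal.ofReal 2) ?_ ?_ ?_ ?_
  · simpa using h_dom
  · exact fun k =>
      ((contDiff_regVortex (hc k)).continuous.measurable.sub measurable_vortex).norm.ennreal_ofReal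
  · refine fun k => Eventually.of_forall fun x => ENNReal.ofReal_le_ofReal ?_
    linarith [norm_sub_le (regVortex (c k) x) (vortex x), norm_regVortex_le_one (hc k).le x,
      norm_vortex_le_one x]
  · simp [ENNReal.mul_eq_top]
  · filter_upwards [ae_restrict_ball_ne_zero l] with x hx
    have h := (((tendsto_regVortex hx).comp hc0).sub_const (vortex x)).norm
    rw [sub_self, norm_zero] at h
    simpa using ENNReal.tendsto_ofReal h

theorem relaxedArea_le (l : ℝ) :
    relaxedArea l ≤ vortexGradArea l + ENNReal.ofReal Real.pi := by
  set c : ℕ → ℝ := fun k => 1 / ((k : ℝ) + 1)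
  have hc : ∀ k, 0 < c k := fun k => by positivity
  have hc0 : Tendsto c atTop (𝓝 0) := tendsto_one_div_add_atTop_nhds_zero_nat
  have h_lim : Tendsto (fun k => vortexGradArea l +
      ENNReal.ofReal (2 * Real.pi * √(c k) + Real.pi)) atTop
      (𝓝 (vortexGradArea l + ENNReal.ofReal Real.pi)) := by
    have h := ((Real.continuous_sqrt.tendsto 0).comp hc0).const_mul (2 * Real.pi)
    have h' := ENNReal.tendsto_ofReal (h.add_const Real.pi)
    simp only [Real.sqrt_zero, mul_zero, zero_add] at h'
    exact h'.const_add _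
  calc relaxedArea l
      ≤ liminf (fun k => graphArea (regVortex (c k)) (ball (0 : V2) l)) atTop :=
        sInf_le ⟨fun k => regVortex (c k), fun k => (contDiff_regVortex (hc k)).contDiffOn,
          tendsto_lintegral_regVortex_sub_vortex hc hc0 l, rfl⟩
    _ ≤ liminf (fun k => vortexGradArea l +
          ENNReal.ofReal (2 * Real.pi * √(c k) + Real.pi)) atTop :=
        liminf_le_liminf (Eventually.of_forall fun k => graphArea_regVortex_le (hc k) l)
    _ = vortexGradArea l + ENNReal.ofReal Real.pi := h_lim.liminf_eq

end UpperBound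

/-! ### Ingredients of the calibration -/

section Comass

lemma apply_eq_add (L : V2 →L[ℝ] V2) (x : V2) (i : Fin 2) :
    L x i = x 0 * L (EuclideanSpace.single 0 1) i + x 1 * L (EuclideanSpace.single 1 1) i := by
  conv_lhs => rw [eq_smul_single_add_smul_single x, map_add, map_smul, map_smul]
  rfl

lemma norm_apply_sq_le_frobSq_mul (L : V2 →L[ℝ] V2) (x : V2) :
    ‖L x‖ ^ 2 ≤ frobSq L * ‖x‖ ^ 2 := by
  simp only [norm_sq_eq_add, frobSq, Fin.sum_univ_two, apply_eq_add L x]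
  generalize L (EuclideanSpace.single 0 1) = y
  generalize L (EuclideanSpace.single 1 1) = z
  linarith [sq_nonneg (x 0 * z 0 - x 1 * y 0), sq_nonneg (x 0 * z 1 - x 1 * y 1)]

lemma add_mul_add_mul_le_sqrt_mul_sqrt (a₁ a₂ a₃ b₁ b₂ b₃ : ℝ) :
    a₁ * b₁ + a₂ * b₂ + a₃ * b₃ ≤
      √(a₁ ^ 2 + a₂ ^ 2 + a₃ ^ 2) * √(b₁ ^ 2 + b₂ ^ 2 + b₃ ^ 2) := by
  simpa [Fin.sum_univ_three] using
    Real.sum_mul_le_sqrt_mul_sqrt Finset.univ ![a₁, a₂, a₃] ![b₁, b₂, b₃]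

/-- Geometrically, the left side is a constant 2-covector evaluated on the graph of `L`, and the
Euclidean norm of its coefficients bounds its comass. -/
lemma add_mul_detJ_add_inner_le {α γ κ : ℝ} {b e : V2} (he : ‖e‖ = 1) (hκ : 0 ≤ κ)
    (h : α ^ 2 + γ ^ 2 + ‖b‖ ^ 2 ≤ κ ^ 2) (L : V2 →L[ℝ] V2) :
    α + γ * detJ L + ⟪b, L e⟫ ≤ κ * √(1 + frobSq L + detJ L ^ 2) := by
  have hL : ‖L e‖ ^ 2 ≤ frobSq L := by simpa [he] using norm_apply_sq_le_frobSq_mul L e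
  calc α + γ * detJ L + ⟪b, L e⟫
      ≤ α * 1 + γ * detJ L + ‖b‖ * ‖L e‖ := by
        rw [mul_one]
        gcongr
        exact real_inner_le_norm b (L e)
    _ ≤ √(α ^ 2 + γ ^ 2 + ‖b‖ ^ 2) * √(1 ^ 2 + detJ L ^ 2 + ‖L e‖ ^ 2) :=
        add_mul_add_mul_le_sqrt_mul_sqrt ..
    _ ≤ κ * √(1 + frobSq L + detJ L ^ 2) := by
        rw [one_pow, add_right_comm 1]
        gcongr
        exact Real.sqrt_le_iff.2 ⟨hκ, h⟩

end Comass

section RadialCutoff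

/-- The radial cut-offs used in the calibration. The bound `φ² + φ'² ≤ 1` is what limits the comass
of the calibration away from the vortex, and `R` has to be large to allow for it. -/
structure IsRadialCutoff (R : ℝ) (φ : ℝ → ℝ) : Prop where
  contDiff : ContDiff ℝ 2 φ
  eq_one : ∀ r ≤ 1, φ r = 1
  eq_zero : ∀ r, R ≤ r → φ r = 0
  antitone : Antitone φ
  sq_add_sq_deriv_le : ∀ r, φ r ^ 2 + deriv φ r ^ 2 ≤ 1

namespace IsRadialCutoff

variable {R : ℝ} {φ : ℝ → ℝ} (h : IsRadialCutoff R φ)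
include h

lemma one_lt : 1 < R := by
  by_contra! hR
  have := h.eq_zero 1 hR
  rw [h.eq_one 1 le_rfl] at this
  exact one_ne_zero this

lemma differentiable : Differentiable ℝ φ := h.contDiff.differentiable two_ne_zero

lemma contDiff_deriv : ContDiff ℝ 1 (deriv φ) := h.contDiff.deriv'

lemma deriv_nonpos (r : ℝ) : deriv φ r ≤ 0 := h.antitone.deriv_nonpos

lemma abs_le_one (r : ℝ) : |φ r| ≤ 1 :=
  (sq_le_one_iff_abs_le_one _).1 (by linarith [h.sq_add_sq_deriv_le r, sq_nonneg (deriv φ r)])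

lemma neg_deriv_le_one (r : ℝ) : -deriv φ r ≤ 1 := by
  nlinarith [h.sq_add_sq_deriv_le r, sq_nonneg (φ r), h.deriv_nonpos r]

lemma nonneg (r : ℝ) : 0 ≤ φ r :=
  (h.eq_zero _ (le_max_right r R)).ge.trans (h.antitone (le_max_left r R))

lemma deriv_eq_zero_of_le {r : ℝ} (hr : r ≤ 1) : deriv φ r = 0 :=
  IsLocalMax.deriv_eq_zero (Eventually.of_forall fun s => by
    rw [h.eq_one r hr]
    exact (le_abs_self _).trans (h.abs_le_one s))

lemma deriv_eq_zero_of_ge {r : ℝ} (hr : R ≤ r) : deriv φ r = 0 :=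
  IsLocalMin.deriv_eq_zero (Eventually.of_forall fun s => by
    rw [h.eq_zero r hr]
    exact h.nonneg s)

lemma neg_deriv_div_le_one {r : ℝ} (hr : 0 < r) : -deriv φ r / r ≤ 1 := by
  rcases le_total r 1 with hr1 | hr1
  · simp [h.deriv_eq_zero_of_le hr1]
  · exact div_le_one_of_le₀ ((h.neg_deriv_le_one r).trans hr1) hr.le

end IsRadialCutoff

lemma exists_abs_deriv_smoothTransition_le :
    ∃ C > 0, ∀ t, |deriv Real.smoothTransition t| ≤ C := by
  have h_zero : ∀ t ∉ Set.Icc (0 : ℝ) 1, deriv Real.smoothTransition t = 0 := fun t ht => by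
    rcases not_and_or.1 ht with ht | ht
    · refine IsLocalMin.deriv_eq_zero (Eventually.of_forall fun s => ?_)
      rw [Real.smoothTransition.zero_of_nonpos (not_le.1 ht).le]
      exact Real.smoothTransition.nonneg s
    · refine IsLocalMax.deriv_eq_zero (Eventually.of_forall fun s => ?_)
      rw [Real.smoothTransition.one_of_one_le (not_le.1 ht).le]
      exact Real.smoothTransition.le_one s
  have h_supp : HasCompactSupport (deriv Real.smoothTransition) :=
    .of_support_subset_isCompact isCompact_Icc fun t ht => by_contra fun h => ht (h_zero t h)
  obtain ⟨C, hC⟩ := (Real.smoothTransition.contDiff.continuous_deriv le_rfl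
    ).bounded_above_of_compact_support h_supp
  exact ⟨max C 1, by positivity, fun t => (hC t).trans (le_max_left C 1)⟩

lemma exists_slow_angle : ∃ (R : ℝ) (θ : ℝ → ℝ), ContDiff ℝ 2 θ ∧ Monotone θ ∧
    (∀ r ≤ 1, θ r = 0) ∧ (∀ r, R ≤ r → θ r = Real.pi / 2) ∧ ∀ r, |deriv θ r| ≤ 1 := by
  obtain ⟨C, hC, hC_le⟩ := exists_abs_deriv_smoothTransition_le
  refine ⟨2 * C + 1, fun r => Real.pi / 2 * Real.smoothTransition ((r - 1) / (2 * C)),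
    contDiff_const.mul (Real.smoothTransition.contDiff.comp (by fun_prop)), ?_, ?_, ?_, ?_⟩
  · exact (Real.smoothTransition.monotone.comp fun r r' hr => by gcongr).const_mul (by positivity)
  · intro r hr
    beta_reduce
    rw [Real.smoothTransition.zero_of_nonpos
      (div_nonpos_of_nonpos_of_nonneg (by linarith) (by positivity)), mul_zero]
  · intro r hr
    beta_reduce
    rw [Real.smoothTransition.one_of_one_le ((one_le_div (by positivity)).2 (by linarith)),
      mul_one]
  · intro r
    have h := ((Real.smoothTransition.contDiff (n := 1)).differentiable one_ne_zero
      ((r - 1) / (2 * C))).hasDerivAt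
    have hθ : HasDerivAt (fun r => Real.pi / 2 * Real.smoothTransition ((r - 1) / (2 * C))) _ r :=
      (h.comp r (((hasDerivAt_id r).sub_const 1).div_const (2 * C))).const_mul _
    calc |deriv (fun r => Real.pi / 2 * Real.smoothTransition ((r - 1) / (2 * C))) r|
        = Real.pi / 2 * |deriv Real.smoothTransition ((r - 1) / (2 * C))| / (2 * C) := by
          rw [hθ.deriv, mul_one_div, abs_mul, abs_of_pos (half_pos Real.pi_pos), abs_div,
            abs_of_pos (mul_pos two_pos hC), mul_div_assoc]
      _ ≤ 4 / 2 * C / (2 * C) := by gcongr; exacts [Real.pi_le_four, hC_le _]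
      _ = 1 := by field_simp; norm_num

lemma exists_isRadialCutoff : ∃ R φ, IsRadialCutoff R φ := by
  obtain ⟨R, θ, hθ, h_mono, h_zero, h_R, h_deriv⟩ := exists_slow_angle
  have h_mem (r) : θ r ∈ Set.Icc 0 Real.pi := by
    rw [← h_zero (min r 1) (min_le_right r 1)]
    refine ⟨h_mono (min_le_left r 1), ?_⟩
    calc θ r ≤ θ (max r R) := h_mono (le_max_left r R)
      _ = Real.pi / 2 := h_R _ (le_max_right r R)
      _ ≤ Real.pi := by linarith [Real.pi_pos]
  refine ⟨R, fun r => Real.cos (θ r), ⟨hθ.cos, fun r hr => ?_, fun r hr => ?_, fun r r' hr => ?_,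
    fun r => ?_⟩⟩
  · rw [h_zero r hr, Real.cos_zero]
  · rw [h_R r hr, Real.cos_pi_div_two]
  · exact Real.strictAntiOn_cos.antitoneOn (h_mem r) (h_mem r') (h_mono hr)
  · rw [(hθ.differentiable two_ne_zero r).hasDerivAt.cos.deriv, mul_pow, neg_sq]
    have h_sq : deriv θ r ^ 2 ≤ 1 := (sq_le_one_iff_abs_le_one _).2 (h_deriv r)
    calc Real.cos (θ r) ^ 2 + Real.sin (θ r) ^ 2 * deriv θ r ^ 2
        ≤ Real.cos (θ r) ^ 2 + Real.sin (θ r) ^ 2 * 1 := by gcongr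
      _ = 1 := by rw [mul_one, Real.cos_sq_add_sin_sq]

end RadialCutoff

section CurlPotential

/-- The function `a` for which the planar field `v ↦ a (‖v‖²) • perp v` has curl `κ (‖v‖²)`, given
by the homotopy formula of the Poincaré lemma. -/
def curlPotential (κ : ℝ → ℝ) (t : ℝ) : ℝ := (∫ s in (0 : ℝ)..1, κ (s * t)) / 2

variable {κ : ℝ → ℝ}

lemma mul_curlPotential (κ : ℝ → ℝ) (t : ℝ) :
    t * curlPotential κ t = (∫ s in (0 : ℝ)..t, κ s) / 2 := by
  have h := intervalIntegral.smul_integral_comp_mul_right (a := 0) (b := 1) κ t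
  rw [smul_eq_mul, zero_mul, one_mul] at h
  rw [curlPotential, mul_div_assoc', h]

lemma hasDerivAt_mul_curlPotential (hκ : Continuous κ) (t : ℝ) :
    HasDerivAt (fun t => t * curlPotential κ t) (κ t / 2) t := by
  simp only [mul_curlPotential]
  exact (hκ.integral_hasStrictDerivAt 0 t).hasDerivAt.div_const 2

lemma curlPotential_eq_of_forall_le {c t₀ t : ℝ} (hc : ∀ t ≤ t₀, κ t = c) (ht₀ : 0 ≤ t₀)
    (ht : t ≤ t₀) : curlPotential κ t = c / 2 := by
  have h : ∫ s in (0 : ℝ)..1, κ (s * t) = ∫ _ in (0 : ℝ)..1, c :=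
    intervalIntegral.integral_congr fun s hs => by
      rw [Set.uIcc_of_le zero_le_one] at hs
      refine hc _ ?_
      nlinarith [mul_le_mul_of_nonneg_left ht hs.1, hs.2]
  rw [curlPotential, h, intervalIntegral.integral_const, sub_zero, one_smul]

lemma contDiff_curlPotential {c t₀ : ℝ} (hκ : Continuous κ) (hc : ∀ t ≤ t₀, κ t = c)
    (ht₀ : 0 < t₀) : ContDiff ℝ 1 (curlPotential κ) := by
  rw [contDiff_iff_contDiffAt]
  intro t
  rcases lt_or_ge t t₀ with ht | ht
  · refine (contDiffAt_const (c := c / 2)).congr_of_eventuallyEq ?_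
    filter_upwards [Iio_mem_nhds ht] with s hs
    exact curlPotential_eq_of_forall_le hc ht₀.le (le_of_lt hs)
  · have h_mul : ContDiff ℝ 1 fun t => t * curlPotential κ t := by
      rw [contDiff_one_iff_deriv]
      refine ⟨fun t => (hasDerivAt_mul_curlPotential hκ t).differentiableAt, ?_⟩
      rw [funext fun t => (hasDerivAt_mul_curlPotential hκ t).deriv]
      exact hκ.div_const 2
    have ht' : 0 < t := ht₀.trans_le ht
    refine (h_mul.contDiffAt.div contDiffAt_id ht'.ne').congr_of_eventuallyEq ?_
    filter_upwards [Ioi_mem_nhds ht'] with s hs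
    exact (mul_div_cancel_left₀ _ (ne_of_gt hs)).symm

lemma curlPotential_add_mul_deriv {t : ℝ} (hκ : Continuous κ)
    (h : DifferentiableAt ℝ (curlPotential κ) t) :
    curlPotential κ t + t * deriv (curlPotential κ) t = κ t / 2 := by
  have h_mul := (hasDerivAt_id' t).mul h.hasDerivAt
  rw [one_mul] at h_mul
  exact h_mul.unique (hasDerivAt_mul_curlPotential hκ t)

lemma curlPotential_nonneg (h : ∀ t, 0 ≤ κ t) (t : ℝ) : 0 ≤ curlPotential κ t :=
  div_nonneg (intervalIntegral.integral_nonneg zero_le_one fun _ _ => h _) two_pos.le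

lemma curlPotential_mono {κ' : ℝ → ℝ} (hκ : Continuous κ) (hκ' : Continuous κ')
    (h : ∀ t, κ t ≤ κ' t) (t : ℝ) : curlPotential κ t ≤ curlPotential κ' t :=
  div_le_div_of_nonneg_right (intervalIntegral.integral_mono_on zero_le_one
    (Continuous.intervalIntegrable (by fun_prop) _ _)
    (Continuous.intervalIntegrable (by fun_prop) _ _) fun _ _ => h _) two_pos.le

lemma mul_curlPotential_eq_of_forall_ge {t₁ t t' : ℝ} (hκ : Continuous κ)
    (h : ∀ t, t₁ ≤ t → κ t = 0) (ht : t₁ ≤ t) (ht' : t₁ ≤ t') :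
    t * curlPotential κ t = t' * curlPotential κ t' := by
  have h_int (t) (ht : t₁ ≤ t) : ∫ s in (0 : ℝ)..t, κ s = ∫ s in (0 : ℝ)..t₁, κ s := by
    rw [← intervalIntegral.integral_add_adjacent_intervals (hκ.intervalIntegrable 0 t₁)
      (hκ.intervalIntegrable t₁ t), add_eq_left]
    refine intervalIntegral.integral_zero_ae (Eventually.of_forall fun s hs => h s ?_)
    rw [Set.uIoc_of_le ht] at hs
    exact hs.1.le
  rw [mul_curlPotential, mul_curlPotential, h_int t ht, h_int t' ht']

/-- A smooth cut-off in `t = ‖v‖²` that equals `1` for `t ≤ 1 - 3 * δ` and vanishes for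
`t ≥ 1 - 2 * δ`, hence in a `δ`-neighbourhood of the unit circle. -/
def innerCutoff (δ t : ℝ) : ℝ := Real.smoothTransition ((1 - 2 * δ - t) / δ)

variable {δ t : ℝ}

lemma continuous_innerCutoff (δ : ℝ) : Continuous (innerCutoff δ) :=
  Real.smoothTransition.continuous.comp (by fun_prop)

lemma innerCutoff_nonneg (δ t : ℝ) : 0 ≤ innerCutoff δ t := Real.smoothTransition.nonneg _

lemma innerCutoff_le_one (δ t : ℝ) : innerCutoff δ t ≤ 1 := Real.smoothTransition.le_one _

lemma innerCutoff_eq_one (hδ : 0 < δ) (ht : t ≤ 1 - 3 * δ) : innerCutoff δ t = 1 :=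
  Real.smoothTransition.one_of_one_le ((one_le_div hδ).2 (by linarith))

lemma innerCutoff_eq_zero (hδ : 0 ≤ δ) (ht : 1 - 2 * δ ≤ t) : innerCutoff δ t = 0 :=
  Real.smoothTransition.zero_of_nonpos (div_nonpos_of_nonpos_of_nonneg (by linarith) hδ)

lemma contDiff_curlPotential_innerCutoff (hδ : 0 < δ) (hδ' : δ ≤ 1 / 4) :
    ContDiff ℝ 1 (curlPotential (innerCutoff δ)) :=
  contDiff_curlPotential (continuous_innerCutoff δ) (fun _ => innerCutoff_eq_one hδ)
    (by linarith : 0 < 1 - 3 * δ)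

lemma curlPotential_innerCutoff_nonneg (δ t : ℝ) : 0 ≤ curlPotential (innerCutoff δ) t :=
  curlPotential_nonneg (innerCutoff_nonneg δ) t

lemma curlPotential_innerCutoff_le (δ t : ℝ) : curlPotential (innerCutoff δ) t ≤ 1 / 2 :=
  (curlPotential_mono (continuous_innerCutoff δ) continuous_const (innerCutoff_le_one δ) t).trans
    (by simp [curlPotential])

lemma mul_curlPotential_innerCutoff (hδ : 0 ≤ δ) (ht : 1 - 2 * δ ≤ t) :
    t * curlPotential (innerCutoff δ) t = curlPotential (innerCutoff δ) 1 := by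
  rw [mul_curlPotential_eq_of_forall_ge (continuous_innerCutoff δ)
    (fun _ => innerCutoff_eq_zero hδ) ht (by linarith : 1 - 2 * δ ≤ 1), one_mul]

lemma mul_curlPotential_innerCutoff_le (hδ : 0 ≤ δ) (t : ℝ) :
    t * curlPotential (innerCutoff δ) t ≤ 1 / 2 := by
  have h0 := curlPotential_innerCutoff_nonneg δ t
  have h1 := curlPotential_innerCutoff_le δ
  rcases le_total t 1 with ht | ht
  · nlinarith [h1 t]
  · rw [mul_curlPotential_innerCutoff hδ (by linarith)]
    exact h1 1

lemma sub_le_curlPotential_innerCutoff (hδ : 0 < δ) (hδ' : δ ≤ 1 / 4) :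
    (1 - 3 * δ) / 2 ≤ curlPotential (innerCutoff δ) 1 := by
  have h_eq : curlPotential (innerCutoff δ) (1 - 3 * δ) = 1 / 2 :=
    curlPotential_eq_of_forall_le (fun _ => innerCutoff_eq_one hδ) (by linarith) le_rfl
  have h_mono : ∫ s in (0 : ℝ)..(1 - 3 * δ), innerCutoff δ s ≤
      ∫ s in (0 : ℝ)..1, innerCutoff δ s :=
    intervalIntegral.integral_mono_interval le_rfl (by linarith) (by linarith)
      (Eventually.of_forall (innerCutoff_nonneg δ))
      ((continuous_innerCutoff δ).intervalIntegrable 0 1)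
  calc (1 - 3 * δ) / 2 = (1 - 3 * δ) * curlPotential (innerCutoff δ) (1 - 3 * δ) := by
        rw [h_eq, mul_one_div]
    _ ≤ 1 * curlPotential (innerCutoff δ) 1 := by
        rw [mul_curlPotential, mul_curlPotential]
        gcongr
    _ = curlPotential (innerCutoff δ) 1 := one_mul _

lemma tendsto_curlPotential_innerCutoff :
    Tendsto (fun δ => curlPotential (innerCutoff δ) 1) (𝓝[>] 0) (𝓝 (1 / 2)) := by
  have h_lower : Tendsto (fun δ : ℝ => (1 - 3 * δ) / 2) (𝓝[>] 0) (𝓝 (1 / 2)) := by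
    have h : Tendsto (fun δ : ℝ => (1 - 3 * δ) / 2) (𝓝 0) (𝓝 ((1 - 3 * 0) / 2)) :=
      Continuous.tendsto (by fun_prop) 0
    simpa using h.mono_left nhdsWithin_le_nhds
  refine tendsto_of_tendsto_of_tendsto_of_le_of_le' h_lower tendsto_const_nhds ?_
    (Eventually.of_forall fun δ => curlPotential_innerCutoff_le δ 1)
  filter_upwards [Ioo_mem_nhdsGT (by norm_num : (0 : ℝ) < 1 / 4)] with δ hδ
  exact sub_le_curlPotential_innerCutoff hδ.1 hδ.2.le

end CurlPotential

section TentField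

lemma hasDerivAt_max_zero_sq (t : ℝ) : HasDerivAt (fun t : ℝ => max 0 t ^ 2) (2 * max 0 t) t := by
  refine hasDerivAt_of_hasDerivAt_of_ne' (x := 0) (fun s hs => ?_)
    (Continuous.continuousAt (by fun_prop)) (g := fun t => 2 * max 0 t)
    (Continuous.continuousAt (by fun_prop)) t
  rcases hs.lt_or_gt with hs | hs
  · rw [max_eq_left hs.le, mul_zero]
    refine (hasDerivAt_const s (0 : ℝ)).congr_of_eventuallyEq ?_
    filter_upwards [Iio_mem_nhds hs] with r hr
    rw [max_eq_left (le_of_lt hr), zero_pow two_ne_zero]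
  · rw [max_eq_right hs.le]
    refine ((hasDerivAt_pow 2 s).congr_deriv (by norm_num)).congr_of_eventuallyEq ?_
    filter_upwards [Ioi_mem_nhds hs] with r hr
    rw [max_eq_right (le_of_lt hr)]

lemma contDiff_max_zero_sq : ContDiff ℝ 1 fun t : ℝ => max 0 t ^ 2 := by
  rw [contDiff_one_iff_deriv]
  refine ⟨fun t => (hasDerivAt_max_zero_sq t).differentiableAt, ?_⟩
  rw [funext fun t => (hasDerivAt_max_zero_sq t).deriv]
  fun_prop

variable {F : Type*} [NormedAddCommGroup F] {δ : ℝ} {e z : F}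

/-- The truncated paraboloid `(1 - ‖z‖² / δ²)⁺`. -/
def tent (δ : ℝ) (z : F) : ℝ := max 0 (1 - ‖z‖ ^ 2 / δ ^ 2)

lemma tent_nonneg (δ : ℝ) (z : F) : 0 ≤ tent δ z := le_max_left _ _

lemma tent_le_one (δ : ℝ) (z : F) : tent δ z ≤ 1 :=
  max_le zero_le_one (sub_le_self _ (by positivity))

lemma tent_eq_zero (hδ : 0 < δ) (hz : δ ≤ ‖z‖) : tent δ z = 0 :=
  max_eq_left (sub_nonpos.2 ((one_le_div (by positivity)).2 (by gcongr)))

lemma tent_eq_one_sub (hδ : 0 < δ) (hz : ‖z‖ ≤ δ) : tent δ z = 1 - ‖z‖ ^ 2 / δ ^ 2 :=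
  max_eq_right (sub_nonneg.2 ((div_le_one (by positivity)).2 (by gcongr)))

variable [InnerProductSpace ℝ F]

/-- The gradient of `z ↦ tent δ z ^ 2 * ⟪e, z⟫`, which equals `e` at the origin and vanishes
outside the ball of radius `δ`. -/
def tentField (δ : ℝ) (e z : F) : F :=
  tent δ z ^ 2 • e - (4 * tent δ z / δ ^ 2 * ⟪e, z⟫) • z

lemma hasFDerivAt_tent_sq (δ : ℝ) (z : F) :
    HasFDerivAt (fun z : F => tent δ z ^ 2) (-(4 * tent δ z / δ ^ 2) • innerSL ℝ z) z := by
  have h_norm : HasFDerivAt (fun z : F => 1 - ‖z‖ ^ 2 / δ ^ 2)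
      (-(2 / δ ^ 2) • innerSL ℝ z) z := by
    have h := ((hasStrictFDerivAt_norm_sq z).hasFDerivAt.mul_const (δ ^ 2)⁻¹).const_sub 1
    refine h.congr_fderiv ?_
    ext y
    simp only [neg_apply, smul_apply, innerSL_apply_apply, smul_eq_mul, nsmul_eq_mul]
    push_cast
    ring
  refine ((hasDerivAt_max_zero_sq _).comp_hasFDerivAt z h_norm).congr_fderiv ?_
  rw [smul_smul, tent]
  ring_nf

lemma contDiff_tent_sq (δ : ℝ) : ContDiff ℝ 1 fun z : F => tent δ z ^ 2 :=
  contDiff_max_zero_sq.comp (contDiff_const.sub ((contDiff_norm_sq ℝ).div_const _))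

lemma tentField_eq_zero (hδ : 0 < δ) (e : F) (hz : δ ≤ ‖z‖) : tentField δ e z = 0 := by
  simp [tentField, tent_eq_zero hδ hz]

lemma inner_sq_le_norm_sq (he : ‖e‖ = 1) (z : F) : ⟪e, z⟫ ^ 2 ≤ ‖z‖ ^ 2 := by
  have h := abs_real_inner_le_norm e z
  rw [he, one_mul] at h
  exact sq_le_sq' (neg_le_of_abs_le h) (le_of_abs_le h)

lemma norm_tentField_le_one (hδ : 0 < δ) (he : ‖e‖ = 1) (z : F) : ‖tentField δ e z‖ ≤ 1 := by
  rcases le_total δ ‖z‖ with hz | hz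
  · simp [tentField_eq_zero hδ e hz]
  set q := tent δ z with hq
  set m := ⟪e, z⟫ ^ 2 / δ ^ 2
  have hq0 : 0 ≤ q := tent_nonneg δ z
  have hq1 : q ≤ 1 := tent_le_one δ z
  have h_norm : ‖z‖ ^ 2 / δ ^ 2 = 1 - q := by rw [hq, tent_eq_one_sub hδ hz]; ring
  have : 0 ≤ m := by positivity
  have hm1 : m ≤ 1 - q := by
    rw [← h_norm]
    gcongr ?_ / _
    exact inner_sq_le_norm_sq he z
  have h_sq : ‖tentField δ e z‖ ^ 2 = q ^ 4 - 8 * q ^ 3 * m + 16 * q ^ 2 * m * (1 - q) := by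
    rw [tentField, norm_sub_sq_real, norm_smul, norm_smul, he, inner_smul_left, inner_smul_right,
      ← h_norm, mul_pow _ ‖z‖, Real.norm_eq_abs, Real.norm_eq_abs, sq_abs]
    simp only [conj_trivial, mul_one, sq_abs, m]
    field_simp
    ring
  have h_one : q ^ 4 - 8 * q ^ 3 * m + 16 * q ^ 2 * m * (1 - q) ≤ 1 := by
    have hq_sq : (q * (5 * q - 4)) ^ 2 ≤ 1 :=
      (sq_le_one_iff_abs_le_one _).2 (abs_le.2 ⟨by nlinarith [sq_nonneg (5 * q - 2)], by nlinarith⟩)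
    rcases le_total (2 - 3 * q) 0 with hq2 | hq2
    · have h_neg : q ^ 2 * m * (2 - 3 * q) ≤ 0 := mul_nonpos_of_nonneg_of_nonpos (by positivity) hq2
      linarith [pow_le_one₀ hq0 hq1 (n := 4)]
    · have h_le : q ^ 2 * (2 - 3 * q) * m ≤ q ^ 2 * (2 - 3 * q) * (1 - q) := by gcongr
      linarith
  exact (sq_le_one_iff₀ (norm_nonneg _)).1 (h_sq.trans_le h_one)

lemma one_sub_inner_tentField_le (hδ : 0 < δ) (he : ‖e‖ = 1) (z : F) :
    1 - ⟪tentField δ e z, e⟫ ≤ 6 * (‖z‖ / δ) := by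
  rcases le_total δ ‖z‖ with hz | hz
  · rw [tentField_eq_zero hδ e hz, inner_zero_left]
    linarith [(one_le_div hδ).2 hz]
  have h_inner : 1 - ⟪tentField δ e z, e⟫ =
      1 - tent δ z ^ 2 + 4 * tent δ z * (⟪e, z⟫ ^ 2 / δ ^ 2) := by
    rw [tentField, inner_sub_left, real_inner_smul_left, real_inner_smul_left,
      real_inner_self_eq_norm_sq, he, real_inner_comm e z]
    ring
  have h_sq : ⟪e, z⟫ ^ 2 / δ ^ 2 ≤ (‖z‖ / δ) ^ 2 := by
    rw [div_pow]
    gcongr ?_ / _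
    exact inner_sq_le_norm_sq he z
  have hs0 : 0 ≤ ‖z‖ / δ := by positivity
  have hs1 : ‖z‖ / δ ≤ 1 := (div_le_one hδ).2 hz
  have h_tent : tent δ z = 1 - (‖z‖ / δ) ^ 2 := by rw [tent_eq_one_sub hδ hz, div_pow]
  calc 1 - ⟪tentField δ e z, e⟫
      ≤ 1 - tent δ z ^ 2 + 4 * 1 * (‖z‖ / δ) ^ 2 := by
        rw [h_inner]
        gcongr
        exact tent_le_one δ z
    _ ≤ 6 * (‖z‖ / δ) := by
        rw [h_tent]
        nlinarith [mul_nonneg hs0 (sub_nonneg.2 hs1), sq_nonneg ((‖z‖ / δ) ^ 2)]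

end TentField

/-! ### Calibration inequality -/

section NullLagrangianEvaluation

variable {v : V2 → V2} {L : V2 →L[ℝ] V2} {x : V2}

lemma hasFDerivAt_vortex (hx : x ≠ 0) : HasFDerivAt vortex (fderiv ℝ vortex x) x :=
  ((contDiffOn_vortex (n := 1)).contDiffAt (isOpen_compl_singleton.mem_nhds hx)
    |>.differentiableAt one_ne_zero).hasFDerivAt

lemma hasFDerivAt_perp_vortex (hx : x ≠ 0) :
    HasFDerivAt (fun y => perp (vortex y)) (perp ∘L fderiv ℝ vortex x) x :=
  perp.hasFDerivAt.comp x (hasFDerivAt_vortex hx)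

lemma fderiv_inner_perp_vortex (hx : x ≠ 0) (hv : HasFDerivAt v L x) :
    fderiv ℝ (fun y => ⟪perp (vortex y), v y⟫) x (perp x) =
      ⟪perp (vortex x), L (perp x)⟫ - ⟪vortex x, v x⟫ := by
  rw [((hasFDerivAt_perp_vortex hx).inner ℝ hv).fderiv]
  simp only [ContinuousLinearMap.comp_apply, ContinuousLinearMap.prod_apply,
    fderivInnerCLM_apply, fderiv_vortex_perp hx, perp_perp, inner_neg_left, sub_eq_add_neg]

lemma fderiv_tent_sq_mul_inner (δ : ℝ) (hx : x ≠ 0) (hv : HasFDerivAt v L x) :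
    fderiv ℝ (fun y => tent δ (v y - vortex y) ^ 2 * ⟪perp (vortex y), v y - vortex y⟫) x
        (perp x) =
      ⟪tentField δ (perp (vortex x)) (v x - vortex x), L (perp x) - perp (vortex x)⟫ -
        tent δ (v x - vortex x) ^ 2 * ⟪vortex x, v x - vortex x⟫ := by
  have hz : HasFDerivAt (fun y => v y - vortex y) (L - fderiv ℝ vortex x) x :=
    hv.sub (hasFDerivAt_vortex hx)
  have h_inner := (hasFDerivAt_perp_vortex hx).inner ℝ hz
  have h_mul : HasFDerivAt
      (fun y => tent δ (v y - vortex y) ^ 2 * ⟪perp (vortex y), v y - vortex y⟫) _ x :=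
    ((hasFDerivAt_tent_sq δ (v x - vortex x)).comp x hz).mul h_inner
  have h_fderiv := fderiv_inner_perp_vortex hx hz
  rw [h_inner.fderiv, sub_apply, fderiv_vortex_perp hx] at h_fderiv
  rw [h_mul.fderiv, add_apply, smul_apply, smul_apply, h_fderiv]
  simp only [ContinuousLinearMap.comp_apply, smul_apply, innerSL_apply_apply, sub_apply,
    fderiv_vortex_perp hx, smul_eq_mul, tentField, inner_sub_left, real_inner_smul_left]
  ring

lemma jacobian_mul_sub_jacobian_mul {g : V2 → ℝ} {c d : ℝ} {e : V2}
    (hg : HasFDerivAt g (c • (innerSL ℝ (v x) ∘L L) + d • innerSL ℝ e) x)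
    (hv : HasFDerivAt v L x) :
    jacobian (fun y => g y * v y 0) (fun y => v y 1) x -
        jacobian (fun y => g y * v y 1) (fun y => v y 0) x =
      (2 * g x + c * ‖v x‖ ^ 2) * detJ L + d * ⟪perp (v x), L (perp e)⟫ := by
  have hv_coord (i : Fin 2) : HasFDerivAt (fun y => v y i) (EuclideanSpace.proj i ∘L L) x :=
    hasFDerivWithinAt_univ.1 (hasFDerivWithinAt_euclidean.1 hv.hasFDerivWithinAt i)
  have h0 : HasFDerivAt (fun y => g y * v y 0) _ x := hg.mul (hv_coord 0)
  have h1 : HasFDerivAt (fun y => g y * v y 1) _ x := hg.mul (hv_coord 1)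
  simp only [jacobian, h0.fderiv, h1.fderiv, (hv_coord 0).fderiv,
    (hv_coord 1).fderiv, detJ, norm_sq_eq_add,
    inner_eq_add, apply_eq_add L (perp e), add_apply, smul_apply, ContinuousLinearMap.comp_apply,
    innerSL_apply_apply, PiLp.proj_apply, smul_eq_mul, perp_apply_zero, perp_apply_one,
    PiLp.single_eq_same, ne_eq, zero_ne_one, one_ne_zero, not_false_eq_true,
    PiLp.single_eq_of_ne, mul_one, mul_zero, add_zero, zero_add]
  ring

lemma jacobian_curlPotential {φ κ : ℝ → ℝ} (hx : x ≠ 0) (hφ : DifferentiableAt ℝ φ ‖x‖)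
    (hκ : Continuous κ) (ha : DifferentiableAt ℝ (curlPotential κ) (‖v x‖ ^ 2))
    (hv : HasFDerivAt v L x) :
    jacobian (fun y => φ ‖y‖ * curlPotential κ (‖v y‖ ^ 2) * v y 0) (fun y => v y 1) x -
        jacobian (fun y => φ ‖y‖ * curlPotential κ (‖v y‖ ^ 2) * v y 1) (fun y => v y 0) x =
      φ ‖x‖ * κ (‖v x‖ ^ 2) * detJ L + deriv φ ‖x‖ * curlPotential κ (‖v x‖ ^ 2) *
        ⟪perp (v x), L (perp (vortex x))⟫ := by
  have h_comp := ha.hasDerivAt.comp_hasFDerivAt x ((hasFDerivAt_norm_sq (v x)).comp x hv)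
  have hg : HasFDerivAt (fun y => φ ‖y‖ * curlPotential κ (‖v y‖ ^ 2))
      ((2 * φ ‖x‖ * deriv (curlPotential κ) (‖v x‖ ^ 2)) • (innerSL ℝ (v x) ∘L L) +
        (deriv φ ‖x‖ * curlPotential κ (‖v x‖ ^ 2)) • innerSL ℝ (vortex x)) x := by
    refine ((hasFDerivAt_comp_norm hx hφ).mul h_comp).congr_fderiv ?_
    ext y
    simp only [Function.comp_apply, add_apply, smul_apply, ContinuousLinearMap.comp_apply,
      smul_eq_mul]
    ring
  rw [jacobian_mul_sub_jacobian_mul hg hv]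
  linear_combination 2 * φ ‖x‖ * detJ L * curlPotential_add_mul_deriv hκ ha

end NullLagrangianEvaluation

section PointwiseCalibration

variable {δ : ℝ} {e v : V2}

lemma norm_curlPotential_smul_sub_le_one (hδ : 0 ≤ δ) (he : ‖e‖ = 1) (v : V2) :
    ‖curlPotential (innerCutoff δ) (‖v‖ ^ 2) • v - curlPotential (innerCutoff δ) 1 • e‖ ≤ 1 := by
  set a := curlPotential (innerCutoff δ) (‖v‖ ^ 2)
  have ha0 : 0 ≤ a := curlPotential_innerCutoff_nonneg δ _
  have ha1 : a ≤ 1 / 2 := curlPotential_innerCutoff_le δ _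
  have hav : ‖v‖ ^ 2 * a ≤ 1 / 2 := mul_curlPotential_innerCutoff_le hδ _
  have h_av : ‖a • v‖ ≤ 1 / 2 := by
    rw [norm_smul, Real.norm_of_nonneg ha0]
    refine abs_le_of_sq_le_sq' ?_ (by norm_num) |>.2
    calc (a * ‖v‖) ^ 2 = a * (‖v‖ ^ 2 * a) := by ring
      _ ≤ 1 / 2 * (1 / 2) := by gcongr
      _ = (1 / 2) ^ 2 := by norm_num
  have h_e : ‖curlPotential (innerCutoff δ) 1 • e‖ ≤ 1 / 2 := by
    rw [norm_smul, he, mul_one, Real.norm_of_nonneg (curlPotential_innerCutoff_nonneg δ 1)]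
    exact curlPotential_innerCutoff_le δ 1
  linarith [norm_sub_le (a • v) (curlPotential (innerCutoff δ) 1 • e)]

lemma one_sub_two_mul_le_norm_sq (he : ‖e‖ = 1) (hδ : δ ≤ 1) (hv : ‖v - e‖ ≤ δ) :
    1 - 2 * δ ≤ ‖v‖ ^ 2 := by
  have h : 1 - δ ≤ ‖v‖ := by linarith [norm_sub_norm_le e v, norm_sub_rev e v]
  nlinarith [sq_nonneg δ]

lemma norm_sq_mul_norm_smul_sub_smul_sq {a M : ℝ} (he : ‖e‖ = 1) (ha : ‖v‖ ^ 2 * a = M) :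
    ‖v‖ ^ 2 * ‖a • v - M • e‖ ^ 2 = M ^ 2 * ‖v - e‖ ^ 2 := by
  rw [norm_sub_sq_real, norm_sub_sq_real, real_inner_smul_left, real_inner_smul_right,
    norm_smul, norm_smul, mul_pow, mul_pow, he, Real.norm_eq_abs, Real.norm_eq_abs, sq_abs, sq_abs,
    ← ha]
  ring

lemma norm_curlPotential_smul_sub_le (hδ : 0 < δ) (hδ' : δ ≤ 1 / 4) (he : ‖e‖ = 1)
    (hv : ‖v - e‖ ≤ δ) :
    ‖curlPotential (innerCutoff δ) (‖v‖ ^ 2) • v - curlPotential (innerCutoff δ) 1 • e‖ ≤ δ := by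
  have hv_sq := one_sub_two_mul_le_norm_sq he (by linarith) hv
  have h_eq := norm_sq_mul_norm_smul_sub_smul_sq he (mul_curlPotential_innerCutoff hδ.le hv_sq)
  have hM0 := curlPotential_innerCutoff_nonneg δ 1
  have hM1 := curlPotential_innerCutoff_le δ 1
  refine abs_le_of_sq_le_sq' (le_of_mul_le_mul_left ?_ (by linarith : 0 < ‖v‖ ^ 2)) hδ.le |>.2
  rw [h_eq]
  gcongr ?_ * ?_ ^ 2
  nlinarith

lemma add_mul_inner_le_area {A B : ℝ} {G : V2} (he : ‖e‖ = 1) (hAB : A ^ 2 + B ^ 2 ≤ 1)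
    (hG : ‖G‖ ≤ 1) (L : V2 →L[ℝ] V2) :
    A + B * ⟪G, L e⟫ ≤ √(1 + frobSq L + detJ L ^ 2) := by
  have h_comass := add_mul_detJ_add_inner_le (α := A) (γ := 0) (b := B • G) he zero_le_one
    (by
      have hG_sq : ‖G‖ ^ 2 ≤ 1 := pow_le_one₀ (norm_nonneg G) hG
      rw [norm_smul, mul_pow, Real.norm_eq_abs, sq_abs]
      nlinarith [sq_nonneg B]) L
  rwa [real_inner_smul_left, zero_mul, add_zero, one_mul] at h_comass

lemma mul_detJ_add_mul_inner_le_area {p s κ : ℝ} {b : V2} (he : ‖e‖ = 1) (hκ : 0 ≤ κ)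
    (h : p ^ 2 + (s * ‖b‖) ^ 2 ≤ κ ^ 2) (L : V2 →L[ℝ] V2) :
    p * detJ L + s * ⟪b, L e⟫ ≤ κ * √(1 + frobSq L + detJ L ^ 2) := by
  have h_comass := add_mul_detJ_add_inner_le (α := 0) (γ := p) (b := s • b) he hκ
    (by rwa [norm_smul, Real.norm_eq_abs, zero_pow two_ne_zero, zero_add, mul_pow |s|, sq_abs,
      ← mul_pow]) L
  rwa [real_inner_smul_left, zero_add] at h_comass

-- Near the vortex (`‖v - e‖ ≤ δ`) the curl term has comass at most `δ`, which the factor `1 - δ`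
-- compensates; away from it the tent field vanishes and the curl term alone has comass at most `1`.
lemma calibration_le_area_add {A B p s : ℝ} (hδ : 0 < δ) (hδ' : δ ≤ 1 / 4) (he : ‖e‖ = 1)
    (hAB : A ^ 2 + B ^ 2 ≤ 1) (hps : p ^ 2 + s ^ 2 ≤ 1) (v : V2) (L : V2 →L[ℝ] V2) :
    (1 - δ) * (A + B * ⟪tentField δ (perp e) (v - e), L (perp e)⟫) +
        (p * innerCutoff δ (‖v‖ ^ 2) * detJ L +
          s * ⟪perp (curlPotential (innerCutoff δ) (‖v‖ ^ 2) • v -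
            curlPotential (innerCutoff δ) 1 • e), L (perp e)⟫) ≤
      √(1 + frobSq L + detJ L ^ 2) + ‖v - e‖ / δ := by
  set area := √(1 + frobSq L + detJ L ^ 2)
  set b := curlPotential (innerCutoff δ) (‖v‖ ^ 2) • v - curlPotential (innerCutoff δ) 1 • e
  have he' : ‖perp e‖ = 1 := by rw [norm_perp, he]
  have : 0 ≤ area := Real.sqrt_nonneg _
  have h_curl {κ : ℝ} (hκ : 0 ≤ κ)
      (h : (p * innerCutoff δ (‖v‖ ^ 2)) ^ 2 + (s * ‖b‖) ^ 2 ≤ κ ^ 2) :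
      p * innerCutoff δ (‖v‖ ^ 2) * detJ L + s * ⟪perp b, L (perp e)⟫ ≤ κ * area :=
    mul_detJ_add_mul_inner_le_area he' hκ (by rwa [norm_perp]) L
  rcases le_total ‖v - e‖ δ with hv | hv
  · have h_inner : innerCutoff δ (‖v‖ ^ 2) = 0 :=
      innerCutoff_eq_zero hδ.le (one_sub_two_mul_le_norm_sq he (by linarith) hv)
    have hb : ‖b‖ ≤ δ := norm_curlPotential_smul_sub_le hδ hδ' he hv
    have h_second := h_curl hδ.le <| by
      rw [h_inner, mul_zero, zero_pow two_ne_zero, zero_add, mul_pow, ← one_mul (δ ^ 2)]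
      gcongr
      linarith [sq_nonneg p]
    have h_first : A + B * ⟪tentField δ (perp e) (v - e), L (perp e)⟫ ≤ area :=
      add_mul_inner_le_area he' hAB (norm_tentField_le_one hδ he' _) L
    nlinarith [div_nonneg (norm_nonneg (v - e)) hδ.le]
  · have hb : ‖b‖ ≤ 1 := norm_curlPotential_smul_sub_le_one hδ.le he v
    have h_second := h_curl zero_le_one <|
      calc (p * innerCutoff δ (‖v‖ ^ 2)) ^ 2 + (s * ‖b‖) ^ 2
          = p ^ 2 * innerCutoff δ (‖v‖ ^ 2) ^ 2 + s ^ 2 * ‖b‖ ^ 2 := by ring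
        _ ≤ p ^ 2 * 1 ^ 2 + s ^ 2 * 1 ^ 2 := by
          gcongr
          exacts [innerCutoff_nonneg _ _, innerCutoff_le_one _ _]
        _ ≤ 1 ^ 2 := by linarith
    have hA : A ≤ 1 := abs_le_one_iff_mul_self_le_one.2 (by nlinarith [sq_nonneg B]) |> le_of_abs_le
    rw [tentField_eq_zero hδ _ hv, inner_zero_left, mul_zero, add_zero]
    nlinarith [(one_le_div hδ).2 hv]

end PointwiseCalibration

section Calibration

/-- A smooth radial cutoff equal to `1` on `[2δ, l - 2δ]` and to `0` outside `(δ, l - δ)`. -/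
def annulusCutoff (δ l r : ℝ) : ℝ :=
  Real.smoothTransition (r / δ - 1) * Real.smoothTransition ((l - r) / δ - 1)

/-- The weight `1 / (r √(1 + r²))` of the tangential derivative in the differential of the area
integrand at the vortex, cut off near the origin and near radius `l`. -/
def tangentialWeight (δ l r : ℝ) : ℝ := annulusCutoff δ l r / (r * √(1 + r ^ 2))

/-- The part of the calibration that does not depend on the competitor; for `δ → 0` it tends to
`√(1 + |∇u|²) - φ'(r) / (2r)`, whose second term has integral `π`. -/
def calibrationDensity (φ : ℝ → ℝ) (δ l r : ℝ) : ℝ :=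
  (1 - δ) * (r / √(1 + r ^ 2) + tangentialWeight δ l r) +
    curlPotential (innerCutoff δ) 1 * (-deriv φ r / r)

/-- The part of the calibration that depends on the competitor `v`, a sum of three terms whose
integrals over the disc of radius `l` vanish: a tangential derivative localized to `v ≈ u`, a curl
in the target localized by `φ`, and the tangential derivative of `⟪u^⊥, v⟫`. -/
def nullLagrangian (φ : ℝ → ℝ) (δ l : ℝ) (v : V2 → V2) (x : V2) : ℝ :=
  (1 - δ) * (tangentialWeight δ l ‖x‖ * fderiv ℝ
      (fun y => tent δ (v y - vortex y) ^ 2 * ⟪perp (vortex y), v y - vortex y⟫) x (perp x)) +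
    (jacobian (fun y => φ ‖y‖ * curlPotential (innerCutoff δ) (‖v y‖ ^ 2) * v y 0)
        (fun y => v y 1) x -
      jacobian (fun y => φ ‖y‖ * curlPotential (innerCutoff δ) (‖v y‖ ^ 2) * v y 1)
        (fun y => v y 0) x) +
    curlPotential (innerCutoff δ) 1 *
      (-deriv φ ‖x‖ / ‖x‖ * fderiv ℝ (fun y => ⟪perp (vortex y), v y⟫) x (perp x))

/-- The constant in front of the `L¹` distance to the vortex in the calibration inequality. -/
def calibrationError (δ : ℝ) : ℝ := 1 / δ + 1 / δ * (6 / δ + 1) + 1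

variable {φ : ℝ → ℝ} {δ l R r : ℝ} {v : V2 → V2} {x : V2}

lemma annulusCutoff_nonneg (δ l r : ℝ) : 0 ≤ annulusCutoff δ l r :=
  mul_nonneg (Real.smoothTransition.nonneg _) (Real.smoothTransition.nonneg _)

lemma annulusCutoff_le_one (δ l r : ℝ) : annulusCutoff δ l r ≤ 1 :=
  mul_le_one₀ (Real.smoothTransition.le_one _) (Real.smoothTransition.nonneg _)
    (Real.smoothTransition.le_one _)

lemma annulusCutoff_eq_zero_of_le (hδ : 0 < δ) (l : ℝ) (hr : r ≤ δ) :
    annulusCutoff δ l r = 0 := by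
  rw [annulusCutoff, Real.smoothTransition.zero_of_nonpos, zero_mul]
  exact sub_nonpos.2 ((div_le_one hδ).2 hr)

lemma annulusCutoff_eq_zero_of_ge (hδ : 0 < δ) (hr : l - δ ≤ r) : annulusCutoff δ l r = 0 := by
  rw [annulusCutoff, mul_comm, Real.smoothTransition.zero_of_nonpos, zero_mul]
  exact sub_nonpos.2 ((div_le_one hδ).2 (by linarith))

lemma annulusCutoff_eq_one (hδ : 0 < δ) (hr : 2 * δ ≤ r) (hrl : 2 * δ ≤ l - r) :
    annulusCutoff δ l r = 1 := by
  rw [annulusCutoff, Real.smoothTransition.one_of_one_le, Real.smoothTransition.one_of_one_le,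
    one_mul]
  all_goals linarith [(le_div_iff₀ hδ).2 hr, (le_div_iff₀ hδ).2 hrl]

lemma contDiff_annulusCutoff {n : ℕ∞} (δ l : ℝ) : ContDiff ℝ n (annulusCutoff δ l) :=
  (Real.smoothTransition.contDiff.comp ((contDiff_id.div_const δ).sub contDiff_const)).mul
    (Real.smoothTransition.contDiff.comp
      (((contDiff_const.sub contDiff_id).div_const δ).sub contDiff_const))

lemma one_le_sqrt_one_add_sq (r : ℝ) : 1 ≤ √(1 + r ^ 2) :=
  Real.one_le_sqrt.2 (le_add_of_nonneg_right (sq_nonneg r))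

lemma tangentialWeight_nonneg (δ l : ℝ) (hr : 0 ≤ r) : 0 ≤ tangentialWeight δ l r :=
  div_nonneg (annulusCutoff_nonneg δ l r) (mul_nonneg hr (Real.sqrt_nonneg _))

lemma tangentialWeight_le (hδ : 0 < δ) (l r : ℝ) : tangentialWeight δ l r ≤ 1 / δ := by
  rcases le_total r δ with hr | hr
  · rw [tangentialWeight, annulusCutoff_eq_zero_of_le hδ l hr, zero_div]
    exact one_div_nonneg.2 hδ.le
  · refine div_le_div₀ zero_le_one (annulusCutoff_le_one δ l r) hδ ?_
    nlinarith [one_le_sqrt_one_add_sq r]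

lemma contDiffOn_tangentialWeight {n : ℕ∞} (δ l : ℝ) :
    ContDiffOn ℝ n (tangentialWeight δ l) (Set.Ioi 0) := by
  refine (contDiff_annulusCutoff δ l).contDiffOn.div
    (contDiffOn_id.mul (ContDiffOn.sqrt (by fun_prop) fun r _ => by positivity)) fun r hr => ?_
  exact mul_ne_zero (ne_of_gt hr) (by positivity)

lemma sq_div_sqrt_add_sq_mul_tangentialWeight_le (δ l : ℝ) (hr : 0 < r) :
    (r / √(1 + r ^ 2)) ^ 2 + (r * tangentialWeight δ l r) ^ 2 ≤ 1 := by
  have h_weight : r * tangentialWeight δ l r = annulusCutoff δ l r / √(1 + r ^ 2) := by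
    rw [tangentialWeight]
    field_simp
  have h_cutoff : annulusCutoff δ l r ^ 2 ≤ 1 :=
    pow_le_one₀ (annulusCutoff_nonneg δ l r) (annulusCutoff_le_one δ l r)
  rw [h_weight, div_pow, div_pow, Real.sq_sqrt (by positivity), ← add_div,
    div_le_one (by positivity)]
  linarith

lemma calibrationDensity_add_nullLagrangian (hδ : 0 < δ) (hδ' : δ ≤ 1 / 4)
    (hφ : Differentiable ℝ φ) (hx : x ≠ 0) (hv : DifferentiableAt ℝ v x) :
    calibrationDensity φ δ l ‖x‖ + nullLagrangian φ δ l v x =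
      (1 - δ) * (‖x‖ / √(1 + ‖x‖ ^ 2) + ‖x‖ * tangentialWeight δ l ‖x‖ *
          ⟪tentField δ (perp (vortex x)) (v x - vortex x),
            fderiv ℝ v x (perp (vortex x))⟫) +
        (φ ‖x‖ * innerCutoff δ (‖v x‖ ^ 2) * detJ (fderiv ℝ v x) +
          deriv φ ‖x‖ * ⟪perp (curlPotential (innerCutoff δ) (‖v x‖ ^ 2) • v x -
            curlPotential (innerCutoff δ) 1 • vortex x), fderiv ℝ v x (perp (vortex x))⟫) +
        (1 - δ) * tangentialWeight δ l ‖x‖ *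
          (1 - ⟪tentField δ (perp (vortex x)) (v x - vortex x), perp (vortex x)⟫ -
            tent δ (v x - vortex x) ^ 2 * ⟪vortex x, v x - vortex x⟫) -
        curlPotential (innerCutoff δ) 1 * (-deriv φ ‖x‖ / ‖x‖) *
          ⟪vortex x, v x - vortex x⟫ := by
  have h_perp : perp x = ‖x‖ • perp (vortex x) := by rw [← map_smul, norm_smul_vortex hx]
  have h_unit : ⟪vortex x, vortex x⟫ = 1 := by
    rw [real_inner_self_eq_norm_sq, norm_vortex hx, one_pow]
  have h_norm : ‖x‖ ≠ 0 := norm_ne_zero_iff.2 hx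
  have ha := (contDiff_curlPotential_innerCutoff hδ hδ').differentiable one_ne_zero
  rw [calibrationDensity, nullLagrangian, fderiv_tent_sq_mul_inner δ hx hv.hasFDerivAt,
    jacobian_curlPotential hx (hφ _) (continuous_innerCutoff δ) (ha _) hv.hasFDerivAt,
    fderiv_inner_perp_vortex hx hv.hasFDerivAt]
  simp only [h_perp, map_sub, map_smul, inner_sub_left, inner_sub_right, real_inner_smul_left,
    real_inner_smul_right, h_unit]
  field_simp
  ring

lemma one_sub_inner_tentField_sub_le (hδ : 0 < δ) {e τ : V2} (he : ‖e‖ = 1) (hτ : ‖τ‖ = 1)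
    (z : V2) :
    1 - ⟪tentField δ τ z, τ⟫ - tent δ z ^ 2 * ⟪e, z⟫ ≤ (6 / δ + 1) * ‖z‖ := by
  have h_inner : -⟪e, z⟫ ≤ ‖z‖ := by
    simpa [he] using neg_le_of_neg_le (neg_le_of_abs_le (abs_real_inner_le_norm e z))
  have h_tent : tent δ z ^ 2 ≤ 1 := pow_le_one₀ (tent_nonneg δ z) (tent_le_one δ z)
  have h_mul : tent δ z ^ 2 * -⟪e, z⟫ ≤ ‖z‖ :=
    calc tent δ z ^ 2 * -⟪e, z⟫ ≤ tent δ z ^ 2 * ‖z‖ := by gcongr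
      _ ≤ 1 * ‖z‖ := by gcongr
      _ = ‖z‖ := one_mul _
  have h_field : 1 - ⟪tentField δ τ z, τ⟫ ≤ 6 / δ * ‖z‖ :=
    (one_sub_inner_tentField_le hδ hτ z).trans_eq (by ring)
  linarith

lemma calibrationDensity_add_nullLagrangian_le (hφ : IsRadialCutoff R φ) (hδ : 0 < δ)
    (hδ' : δ ≤ 1 / 4) (l : ℝ) (hx : x ≠ 0) (hv : DifferentiableAt ℝ v x) :
    calibrationDensity φ δ l ‖x‖ + nullLagrangian φ δ l v x ≤
      areaIntegrand v x + calibrationError δ * ‖v x - vortex x‖ := by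
  have hr : 0 < ‖x‖ := norm_pos_iff.2 hx
  have he : ‖vortex x‖ = 1 := norm_vortex hx
  have he' : ‖perp (vortex x)‖ = 1 := by rw [norm_perp, he]
  set z := v x - vortex x
  have h_main := calibration_le_area_add hδ hδ' he
    (sq_div_sqrt_add_sq_mul_tangentialWeight_le δ l hr) (hφ.sq_add_sq_deriv_le ‖x‖) (v x)
    (fderiv ℝ v x)
  have h_weight : (1 - δ) * tangentialWeight δ l ‖x‖ ≤ 1 / δ := by
    nlinarith [tangentialWeight_nonneg δ l hr.le, tangentialWeight_le hδ l ‖x‖]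
  have h_weight0 : 0 ≤ (1 - δ) * tangentialWeight δ l ‖x‖ :=
    mul_nonneg (by linarith) (tangentialWeight_nonneg δ l hr.le)
  have h_tent := (mul_le_mul_of_nonneg_left (one_sub_inner_tentField_sub_le hδ he he' z)
    h_weight0).trans (mul_le_mul_of_nonneg_right h_weight (by positivity))
  have h_coeff : curlPotential (innerCutoff δ) 1 * (-deriv φ ‖x‖ / ‖x‖) ≤ 1 := by
    have h_half := curlPotential_innerCutoff_le δ 1
    exact mul_le_one₀ (by linarith)
      (div_nonneg (neg_nonneg.2 (hφ.deriv_nonpos _)) hr.le) (hφ.neg_deriv_div_le_one hr)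
  have h_coeff0 : 0 ≤ curlPotential (innerCutoff δ) 1 * (-deriv φ ‖x‖ / ‖x‖) :=
    mul_nonneg (curlPotential_innerCutoff_nonneg δ 1)
      (div_nonneg (neg_nonneg.2 (hφ.deriv_nonpos _)) hr.le)
  have h_inner : -‖z‖ ≤ ⟪vortex x, z⟫ := by
    simpa [he] using neg_le_of_abs_le (abs_real_inner_le_norm (vortex x) z)
  have h_dilation : -‖z‖ ≤
      curlPotential (innerCutoff δ) 1 * (-deriv φ ‖x‖ / ‖x‖) * ⟪vortex x, z⟫ := by
    nlinarith [norm_nonneg z]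
  have h_error : calibrationError δ * ‖z‖ =
      ‖z‖ / δ + 1 / δ * ((6 / δ + 1) * ‖z‖) + ‖z‖ := by
    rw [calibrationError]
    ring
  rw [calibrationDensity_add_nullLagrangian hδ hδ' hφ.differentiable hx hv, areaIntegrand]
  linarith

end Calibration

/-! ### Lower bound -/

section NullLagrangianIntegral

variable {φ : ℝ → ℝ} {δ l R : ℝ} {v : V2 → V2}

lemma IsRadialCutoff.contDiff_comp_norm (hφ : IsRadialCutoff R φ) :
    ContDiff ℝ 1 fun x : V2 => φ ‖x‖ := by
  refine contDiff_iff_contDiffAt.2 fun x => ?_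
  rcases eq_or_ne x 0 with rfl | hx
  · refine contDiffAt_const (c := (1 : ℝ)) |>.congr_of_eventuallyEq ?_
    filter_upwards [ball_mem_nhds (0 : V2) one_pos] with y hy
    exact hφ.eq_one _ (mem_ball_zero_iff.1 hy).le
  · exact (hφ.contDiff.of_le one_le_two).contDiffAt.comp x (contDiffAt_norm ℝ hx)

lemma IsRadialCutoff.contDiffOn_deriv_div (hφ : IsRadialCutoff R φ) :
    ContDiffOn ℝ 1 (fun r => -deriv φ r / r) (Set.Ioi 0) :=
  hφ.contDiff_deriv.neg.contDiffOn.div contDiffOn_id fun _ hr => ne_of_gt hr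

lemma integrableOn_and_integral_jacobian_radial_mul_eq_zero {g h : V2 → ℝ} (hRl : R < l)
    (hφ : IsRadialCutoff R φ) (hg : ContDiffOn ℝ 1 g (ball 0 l))
    (hh : ContDiffOn ℝ 1 h (ball 0 l)) :
    IntegrableOn (jacobian (fun x => φ ‖x‖ * g x) h) (ball 0 l) ∧
      ∫ x in ball 0 l, jacobian (fun x => φ ‖x‖ * g x) h x = 0 := by
  set f : V2 → ℝ := fun x => φ ‖x‖ * g x
  have hf : ContDiffOn ℝ 1 f (ball 0 l) := hφ.contDiff_comp_norm.contDiffOn.mul hg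
  have hsupp : tsupport f ⊆ closedBall 0 R :=
    closure_minimal (fun x hx => mem_closedBall_zero_iff.2 <| le_of_not_ge fun hR =>
      left_ne_zero_of_mul hx (hφ.eq_zero _ hR)) isClosed_closedBall
  have hfc : HasCompactSupport f :=
    (isCompact_closedBall 0 R).of_isClosed_subset (isClosed_tsupport f) hsupp
  have hfU : tsupport f ⊆ ball 0 l := hsupp.trans (closedBall_subset_ball hRl)
  refine ⟨(integrable_jacobian isOpen_ball hf hfc hfU hh).integrableOn, ?_⟩
  rw [setIntegral_eq_integral_of_forall_compl_eq_zero fun x hx => ?_,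
    integral_jacobian_eq_zero isOpen_ball hf hfc hfU hh]
  rw [jacobian, fderiv_of_notMem_tsupport ℝ fun hx' => hx (hfU hx')]
  simp only [zero_apply, zero_mul, sub_zero]

variable (hv : ContDiffOn ℝ 1 v (ball 0 l))
include hv

lemma contDiffOn_inner_perp_vortex :
    ContDiffOn ℝ 1 (fun y => ⟪perp (vortex y), v y⟫) (ball 0 l \ {0}) :=
  (perp.contDiff.comp_contDiffOn (contDiffOn_vortex.mono fun _ hy => hy.2)).inner ℝ
    (hv.mono Set.sdiff_subset)

lemma contDiffOn_tent_sq_mul_inner (δ : ℝ) :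
    ContDiffOn ℝ 1 (fun y => tent δ (v y - vortex y) ^ 2 * ⟪perp (vortex y), v y - vortex y⟫)
      (ball 0 l \ {0}) := by
  have h_vortex : ContDiffOn ℝ 1 vortex (ball (0 : V2) l \ {0}) :=
    contDiffOn_vortex.mono fun _ hy => hy.2
  have h_sub : ContDiffOn ℝ 1 (fun y => v y - vortex y) (ball 0 l \ {0}) :=
    (hv.mono Set.sdiff_subset).sub h_vortex
  exact ((contDiff_tent_sq δ).comp_contDiffOn h_sub).mul
    ((perp.contDiff.comp_contDiffOn h_vortex).inner ℝ h_sub)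

lemma contDiffOn_curlPotential_mul (hδ : 0 < δ) (hδ' : δ ≤ 1 / 4) (i : Fin 2) :
    ContDiffOn ℝ 1 (fun y => curlPotential (innerCutoff δ) (‖v y‖ ^ 2) * v y i) (ball 0 l) :=
  ((contDiff_curlPotential_innerCutoff hδ hδ').comp_contDiffOn (hv.norm_sq ℝ)).mul
    (contDiffOn_euclidean.1 hv i)

lemma integrableOn_and_integral_nullLagrangian_eq_zero (hφ : IsRadialCutoff R φ) (hRl : R < l)
    (hδ : 0 < δ) (hδ' : δ ≤ 1 / 4) :
    IntegrableOn (nullLagrangian φ δ l v) (ball 0 l) ∧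
      ∫ x in ball 0 l, nullLagrangian φ δ l v x = 0 := by
  obtain ⟨h_tent, h_tent_zero⟩ := integrableOn_and_integral_radial_mul_fderiv_perp_eq_zero hδ
    (by linarith : l - δ < l) (contDiffOn_tangentialWeight δ l)
    (fun r hr => by rw [tangentialWeight, annulusCutoff_eq_zero_of_le hδ l hr, zero_div])
    (fun r hr => by rw [tangentialWeight, annulusCutoff_eq_zero_of_ge hδ hr, zero_div])
    (contDiffOn_tent_sq_mul_inner hv δ)
  obtain ⟨h_dilation, h_dilation_zero⟩ := integrableOn_and_integral_radial_mul_fderiv_perp_eq_zero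
    one_pos hRl hφ.contDiffOn_deriv_div
    (fun r hr => by rw [hφ.deriv_eq_zero_of_le hr, neg_zero, zero_div])
    (fun r hr => by rw [hφ.deriv_eq_zero_of_ge hr, neg_zero, zero_div])
    (contDiffOn_inner_perp_vortex hv)
  have h_jacobian (i j : Fin 2) := integrableOn_and_integral_jacobian_radial_mul_eq_zero hRl hφ
    (contDiffOn_curlPotential_mul hv hδ hδ' i) (contDiffOn_euclidean.1 hv j)
  have h_curl := (h_jacobian 0 1).1.sub (h_jacobian 1 0).1
  simp only [← mul_assoc] at h_jacobian h_curl
  constructor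
  · exact ((h_tent.const_mul _).add h_curl).add (h_dilation.const_mul _)
  · refine (integral_add' ((h_tent.const_mul _).add h_curl) (h_dilation.const_mul _)).trans ?_
    rw [integral_add' (h_tent.const_mul _) h_curl, integral_sub' (h_jacobian 0 1).1
      (h_jacobian 1 0).1, integral_const_mul, integral_const_mul, h_tent_zero, h_dilation_zero,
      (h_jacobian 0 1).2, (h_jacobian 1 0).2]
    simp only [mul_zero, sub_zero, add_zero]

end NullLagrangianIntegral

section LowerBound

lemma lintegral_ofReal_le_lintegral_ofReal_add_of_integral_eq_zero {α : Type*}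
    {m : MeasurableSpace α} {μ : Measure α} {f g : α → ℝ} (hf : Integrable f μ) (hf0 : 0 ≤ᵐ[μ] f)
    (hg : Integrable g μ) (hg0 : ∫ x, g x ∂μ = 0) :
    ∫⁻ x, ENNReal.ofReal (f x) ∂μ ≤ ∫⁻ x, ENNReal.ofReal (f x + g x) ∂μ := by
  calc ∫⁻ x, ENNReal.ofReal (f x) ∂μ
      = ENNReal.ofReal (∫ x, (f x + g x) ∂μ) := by
        rw [integral_add hf hg, hg0, add_zero, ofReal_integral_eq_lintegral_ofReal hf hf0]
    _ ≤ ENNReal.ofReal (∫ x, max (f x + g x) 0 ∂μ) :=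
        ENNReal.ofReal_le_ofReal <|
          integral_mono (hf.add hg) (hf.add hg).pos_part fun x => le_max_left _ _
    _ = ∫⁻ x, ENNReal.ofReal (max (f x + g x) 0) ∂μ :=
        ofReal_integral_eq_lintegral_ofReal (hf.add hg).pos_part
          (Eventually.of_forall fun x => le_max_right _ _)
    _ = ∫⁻ x, ENNReal.ofReal (f x + g x) ∂μ := by
        simp only [ENNReal.ofReal_max, ENNReal.ofReal_zero, zero_le, max_eq_left]

variable {φ : ℝ → ℝ} {δ l R r : ℝ}

lemma measurable_calibrationDensity (φ : ℝ → ℝ) (δ l : ℝ) :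
    Measurable (calibrationDensity φ δ l) := by
  have h_cutoff := (contDiff_annulusCutoff (n := 0) δ l).continuous.measurable
  have := measurable_deriv φ
  unfold calibrationDensity tangentialWeight
  fun_prop

lemma calibrationDensity_nonneg (hφ : IsRadialCutoff R φ) (hδ : δ ≤ 1) (l : ℝ) (hr : 0 ≤ r) :
    0 ≤ calibrationDensity φ δ l r :=
  add_nonneg
    (mul_nonneg (sub_nonneg.2 hδ)
      (add_nonneg (div_nonneg hr (Real.sqrt_nonneg _)) (tangentialWeight_nonneg δ l hr)))
    (mul_nonneg (curlPotential_innerCutoff_nonneg δ 1)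
      (div_nonneg (neg_nonneg.2 (hφ.deriv_nonpos r)) hr))

lemma calibrationDensity_le (hφ : IsRadialCutoff R φ) (hδ : 0 < δ) (l : ℝ) (hr : 0 < r) :
    calibrationDensity φ δ l r ≤ 1 + 1 / δ + 1 := by
  have h_sqrt : r / √(1 + r ^ 2) ≤ 1 :=
    div_le_one_of_le₀ (Real.le_sqrt_of_sq_le (by linarith)) (Real.sqrt_nonneg _)
  have h_weight := tangentialWeight_le hδ l r
  have h_half := curlPotential_innerCutoff_le δ 1
  have h_nonneg : 0 ≤ r / √(1 + r ^ 2) + tangentialWeight δ l r :=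
    add_nonneg (by positivity) (tangentialWeight_nonneg δ l hr.le)
  have h_deriv : curlPotential (innerCutoff δ) 1 * (-deriv φ r / r) ≤ 1 :=
    mul_le_one₀ (by linarith) (div_nonneg (neg_nonneg.2 (hφ.deriv_nonpos r)) hr.le)
      (hφ.neg_deriv_div_le_one hr)
  rw [calibrationDensity]
  nlinarith

lemma integrableOn_calibrationDensity (hφ : IsRadialCutoff R φ) (hδ : 0 < δ) (hδ' : δ ≤ 1)
    (l : ℝ) : IntegrableOn (fun x : V2 => calibrationDensity φ δ l ‖x‖) (ball 0 l) := by
  refine Measure.integrableOn_of_bounded measure_ball_lt_top.ne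
    ((measurable_calibrationDensity φ δ l).comp measurable_norm).aestronglyMeasurable
    (M := 1 + 1 / δ + 1) ?_
  filter_upwards [ae_restrict_ball_ne_zero l] with x hx
  rw [Real.norm_of_nonneg (calibrationDensity_nonneg hφ hδ' l (norm_nonneg x))]
  exact calibrationDensity_le hφ hδ l (norm_pos_iff.2 hx)

lemma areaIntegrand_nonneg (v : V2 → V2) (x : V2) : 0 ≤ areaIntegrand v x :=
  Real.sqrt_nonneg _

lemma lintegral_calibrationDensity_le {v : V2 → V2} (hφ : IsRadialCutoff R φ) (hRl : R < l)
    (hδ : 0 < δ) (hδ' : δ ≤ 1 / 4) (hv : ContDiffOn ℝ 1 v (ball 0 l)) :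
    ∫⁻ x in ball (0 : V2) l, ENNReal.ofReal (calibrationDensity φ δ l ‖x‖) ≤
      graphArea v (ball 0 l) + ENNReal.ofReal (calibrationError δ) *
        ∫⁻ x in ball (0 : V2) l, ENNReal.ofReal ‖v x - vortex x‖ := by
  obtain ⟨h_null, h_null_zero⟩ :=
    integrableOn_and_integral_nullLagrangian_eq_zero hv hφ hRl hδ hδ'
  have h_dist : AEMeasurable (fun x => ENNReal.ofReal ‖v x - vortex x‖)
      (volume.restrict (ball 0 l)) :=
    ((hv.continuousOn.aestronglyMeasurable measurableSet_ball).sub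
      measurable_vortex.aestronglyMeasurable).norm.aemeasurable.ennreal_ofReal
  have h_error : 0 ≤ calibrationError δ := by
    unfold calibrationError
    positivity
  calc ∫⁻ x in ball (0 : V2) l, ENNReal.ofReal (calibrationDensity φ δ l ‖x‖)
      ≤ ∫⁻ x in ball (0 : V2) l,
          ENNReal.ofReal (calibrationDensity φ δ l ‖x‖ + nullLagrangian φ δ l v x) :=
        lintegral_ofReal_le_lintegral_ofReal_add_of_integral_eq_zero
          (integrableOn_calibrationDensity hφ hδ (by linarith) l)
          (Eventually.of_forall fun x =>
            calibrationDensity_nonneg hφ (by linarith) l (norm_nonneg x)) h_null h_null_zero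
    _ ≤ ∫⁻ x in ball (0 : V2) l, (ENNReal.ofReal (areaIntegrand v x) +
          ENNReal.ofReal (calibrationError δ) * ENNReal.ofReal ‖v x - vortex x‖) := by
        refine lintegral_mono_ae ?_
        filter_upwards [ae_restrict_ball_ne_zero l, ae_restrict_mem measurableSet_ball]
          with x hx hxl
        rw [← ENNReal.ofReal_mul h_error, ← ENNReal.ofReal_add (areaIntegrand_nonneg v x)
          (mul_nonneg h_error (norm_nonneg _))]
        exact ENNReal.ofReal_le_ofReal <| calibrationDensity_add_nullLagrangian_le hφ hδ hδ' l hx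
          ((hv.contDiffAt (isOpen_ball.mem_nhds hxl)).differentiableAt one_ne_zero)
    _ = _ := by
        rw [lintegral_add_right' _ (h_dist.const_mul _), lintegral_const_mul'' _ h_dist, graphArea]

lemma sqrt_one_add_inv_sq (hr : 0 < r) :
    √(1 + r⁻¹ ^ 2) = r / √(1 + r ^ 2) + 1 / (r * √(1 + r ^ 2)) := by
  have h_sq : √(1 + r ^ 2) ^ 2 = 1 + r ^ 2 := Real.sq_sqrt (by positivity)
  have h_eq : 1 + r⁻¹ ^ 2 = (√(1 + r ^ 2) / r) ^ 2 := by
    rw [div_pow, h_sq]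
    field_simp
    ring
  rw [h_eq, Real.sqrt_sq (by positivity)]
  field_simp
  linarith

lemma tendsto_calibrationDensity (φ : ℝ → ℝ) (hr : 0 < r) (hrl : r < l) :
    Tendsto (fun δ => calibrationDensity φ δ l r) (𝓝[>] 0)
      (𝓝 (√(1 + r⁻¹ ^ 2) + -deriv φ r / (2 * r))) := by
  have h_id : Tendsto (fun δ : ℝ => δ) (𝓝[>] 0) (𝓝 0) :=
    tendsto_nhdsWithin_of_tendsto_nhds tendsto_id
  have h_weight : ∀ᶠ δ in 𝓝[>] 0, tangentialWeight δ l r = 1 / (r * √(1 + r ^ 2)) := by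
    filter_upwards [self_mem_nhdsWithin,
      h_id.eventually_le_const (show 0 < r / 2 by positivity),
      h_id.eventually_le_const (show 0 < (l - r) / 2 by linarith)] with δ hδ hδr hδl
    rw [tangentialWeight, annulusCutoff_eq_one hδ (by linarith) (by linarith)]
  have h_lim := ((h_id.const_sub 1).mul_const (r / √(1 + r ^ 2) + 1 / (r * √(1 + r ^ 2)))).add
    (tendsto_curlPotential_innerCutoff.mul_const (-deriv φ r / r))
  rw [sub_zero, one_mul, ← sqrt_one_add_inv_sq hr,
    show 1 / 2 * (-deriv φ r / r) = -deriv φ r / (2 * r) by ring] at h_lim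
  refine h_lim.congr' ?_
  filter_upwards [h_weight] with δ hδ
  rw [calibrationDensity, hδ, sqrt_one_add_inv_sq hr]

lemma setLIntegral_neg_deriv_div (hφ : IsRadialCutoff R φ) (hRl : R < l) :
    ∫⁻ x in ball (0 : V2) l, ENNReal.ofReal (-deriv φ ‖x‖ / (2 * ‖x‖)) =
      ENNReal.ofReal Real.pi := by
  have hF (r : ℝ) (_ : r ∈ Set.Ici (0 : ℝ)) :
      HasDerivAt (fun r => -φ r / 2) (r * (-deriv φ r / (2 * r))) r := by
    refine ((hφ.differentiable r).hasDerivAt.neg.div_const 2).congr_deriv ?_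
    rcases eq_or_ne r 0 with rfl | hr
    · simp [hφ.deriv_eq_zero_of_le zero_le_one]
    · field_simp
  have hf (r : ℝ) (hr : 0 ≤ r) : 0 ≤ -deriv φ r / (2 * r) :=
    div_nonneg (neg_nonneg.2 (hφ.deriv_nonpos r)) (by positivity)
  have h_mul (r : ℝ) (hr : r ∈ Set.Ioi (0 : ℝ)) : 0 ≤ r * (-deriv φ r / (2 * r)) :=
    mul_nonneg (le_of_lt hr) (hf r (le_of_lt hr))
  have hL : Tendsto (fun r => -φ r / 2) atTop (𝓝 0) := by
    refine tendsto_const_nhds.congr' ?_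
    filter_upwards [eventually_ge_atTop R] with r hr
    rw [hφ.eq_zero r hr, neg_zero, zero_div]
  rw [← ofReal_integral_eq_lintegral_ofReal
      (integrable_comp_norm_of_hasDerivAt hF h_mul hL).integrableOn
      (Eventually.of_forall fun x => hf _ (norm_nonneg x)),
    setIntegral_eq_integral_of_forall_compl_eq_zero fun x hx => ?_,
    integral_comp_norm_of_hasDerivAt hF h_mul hL, hφ.eq_one 0 zero_le_one]
  · ring_nf
  · have hlx : l ≤ ‖x‖ := by simpa using hx
    rw [hφ.deriv_eq_zero_of_ge (by linarith), neg_zero, zero_div]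

lemma vortexGradArea_add_pi_eq (hφ : IsRadialCutoff R φ) (hRl : R < l) :
    vortexGradArea l + ENNReal.ofReal Real.pi =
      ∫⁻ x in ball (0 : V2) l, ENNReal.ofReal (√(1 + ‖x‖⁻¹ ^ 2) + -deriv φ ‖x‖ / (2 * ‖x‖)) := by
  have h_meas : Measurable fun x : V2 => ENNReal.ofReal (-deriv φ ‖x‖ / (2 * ‖x‖)) := by
    have := measurable_deriv φ
    fun_prop
  rw [vortexGradArea, ← setLIntegral_neg_deriv_div hφ hRl, ← lintegral_add_right _ h_meas]
  refine lintegral_congr_ae ?_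
  filter_upwards [ae_restrict_ball_ne_zero l] with x hx
  rw [frobSq_fderiv_vortex hx, ENNReal.ofReal_add (Real.sqrt_nonneg _)
    (div_nonneg (neg_nonneg.2 (hφ.deriv_nonpos _)) (by positivity))]

lemma vortexGradArea_add_pi_le_liminf (hφ : IsRadialCutoff R φ) (hRl : R < l) {δ : ℕ → ℝ}
    (hδ : Tendsto δ atTop (𝓝[>] 0)) :
    vortexGradArea l + ENNReal.ofReal Real.pi ≤
      liminf (fun m => ∫⁻ x in ball (0 : V2) l,
        ENNReal.ofReal (calibrationDensity φ (δ m) l ‖x‖)) atTop := by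
  have h_meas (m : ℕ) :
      Measurable fun x : V2 => ENNReal.ofReal (calibrationDensity φ (δ m) l ‖x‖) :=
    ((measurable_calibrationDensity φ (δ m) l).comp measurable_norm).ennreal_ofReal
  rw [vortexGradArea_add_pi_eq hφ hRl]
  refine (lintegral_mono_ae ?_).trans (lintegral_liminf_le h_meas)
  filter_upwards [ae_restrict_ball_ne_zero l, ae_restrict_mem measurableSet_ball] with x hx hxl
  have h_lim := (tendsto_calibrationDensity φ (norm_pos_iff.2 hx) (mem_ball_zero_iff.1 hxl)).comp hδ
  exact (ENNReal.tendsto_ofReal h_lim).liminf_eq.ge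

theorem le_relaxedArea (hφ : IsRadialCutoff R φ) (hRl : R < l) :
    vortexGradArea l + ENNReal.ofReal Real.pi ≤ relaxedArea l := by
  refine le_sInf ?_
  rintro _ ⟨v, hv, hv_lim, rfl⟩
  have h_calibration {δ : ℝ} (hδ : 0 < δ) (hδ' : δ ≤ 1 / 4) :
      ∫⁻ x in ball (0 : V2) l, ENNReal.ofReal (calibrationDensity φ δ l ‖x‖) ≤
        liminf (fun k => graphArea (v k) (ball 0 l)) atTop := by
    have h_error := ENNReal.Tendsto.const_mul (a := ENNReal.ofReal (calibrationError δ)) hv_lim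
      (Or.inr ENNReal.ofReal_ne_top)
    rw [mul_zero] at h_error
    rw [← ENNReal.liminf_add_of_right_tendsto_zero h_error]
    exact le_liminf_of_le (by isBoundedDefault) <| Eventually.of_forall fun k =>
      lintegral_calibrationDensity_le hφ hRl hδ hδ' (hv k)
  have h_seq : Tendsto (fun m : ℕ => 1 / ((m : ℝ) + 1)) atTop (𝓝[>] 0) :=
    tendsto_nhdsWithin_iff.2 ⟨tendsto_one_div_add_atTop_nhds_zero_nat,
      Eventually.of_forall fun m => Set.mem_Ioi.2 Nat.one_div_pos_of_nat⟩
  have h_small : ∀ᶠ m : ℕ in atTop, 1 / ((m : ℝ) + 1) ∈ Set.Ioc 0 (1 / 4) :=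
    h_seq (Ioc_mem_nhdsGT (by norm_num))
  calc vortexGradArea l + ENNReal.ofReal Real.pi
      ≤ liminf (fun m : ℕ => ∫⁻ x in ball (0 : V2) l,
          ENNReal.ofReal (calibrationDensity φ (1 / ((m : ℝ) + 1)) l ‖x‖)) atTop :=
        vortexGradArea_add_pi_le_liminf hφ hRl h_seq
    _ ≤ liminf (fun _ : ℕ => liminf (fun k => graphArea (v k) (ball 0 l)) atTop) atTop :=
        liminf_le_liminf (h_small.mono fun m hm => h_calibration hm.1 hm.2)
    _ = liminf (fun k => graphArea (v k) (ball 0 l)) atTop := liminf_const _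

end LowerBound

/-- For all sufficiently large radii `l`, the relaxed area of the graph of the vortex map
equals `∫_{B_l} √(1 + |∇u|²) dx + π`. -/
theorem relaxedArea_vortex_eq_of_large_radius :
    ∃ l₀ : ℝ, 0 < l₀ ∧ ∀ l : ℝ, l₀ ≤ l →
      relaxedArea l = vortexGradArea l + ENNReal.ofReal Real.pi := by
  obtain ⟨R, φ, hφ⟩ := exists_isRadialCutoff
  refine ⟨R + 1, by linarith [hφ.one_lt], fun l hl => ?_⟩
  exact le_antisymm (relaxedArea_le l) (le_relaxedArea hφ (by linarith))
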